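/- Limiting absorption for the commutator: Let d ≥ 3 and let 𝔢 be a dispersion relation of class C³ satisfying condition (M). There exists a constant c(𝔢) > 0, depending only on 𝔢, such that for every potential V : Γ → ℝ with Φ_{2,3}(V) < c(𝔢) there is a constant c′ < ∞ with |⟨δ_x, (z − B)^{−1} δ_y⟩| ≤ c′·(1+|x|)²·(1+|y|)² for all z ∈ ℂ∖ℝ and all x, y ∈ Γ, where B = h(|∇𝔢|²) + C_V. -/

import Mathlib

open MeasureTheory Complex Real
open scoped ENNReal

noncomputable section

namespace LatSch

/-- The lattice `Γ = ℤ^d`. -/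
abbrev Γd (d : ℕ) := Fin d → ℤ

/-- The Hilbert space `ℓ²(Γ)`. -/
abbrev L2 (d : ℕ) := lp (fun _ : Γd d => ℂ) 2

/-- Euclidean norm of a lattice point. -/
def lnorm {d : ℕ} (x : Γd d) : ℝ := Real.sqrt (∑ i, ((x i : ℝ)) ^ 2)

/-- The standard basis vector `δ_x` of `ℓ²(Γ)`. -/
def delta {d : ℕ} (x : Γd d) : L2 d := lp.single 2 x 1

local notation "⟪" a ", " b "⟫" => @inner ℂ _ _ a b

/-- The cube `[-π, π]^d`, a fundamental domain of the torus. -/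
def torusBox (d : ℕ) : Set (Fin d → ℝ) := Set.univ.pi fun _ => Set.Icc (-π) π

/-- `⟨p, m⟩` for `p ∈ ℝ^d`, `m ∈ ℤ^d`. -/
def dotZ {d : ℕ} (p : Fin d → ℝ) (m : Γd d) : ℝ := ∑ i, p i * (m i : ℝ)

/-- Fourier coefficient `f̂(m) = (2π)^{-d} ∫_{[-π,π]^d} f(p) e^{i⟨p,m⟩} dp`. -/
def fCoeff {d : ℕ} (f : (Fin d → ℝ) → ℝ) (m : Γd d) : ℂ :=
  ((1 / (2 * π) ^ d : ℝ) : ℂ) *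
    ∫ p in torusBox d, (f p : ℂ) * Complex.exp (Complex.I * (dotZ p m : ℝ))

/-- `H` is the Fourier multiplier (hopping matrix) `h(f)`, characterized by its
matrix elements `⟨δ_x, H δ_y⟩ = f̂(x - y)`. -/
def IsMultiplier {d : ℕ} (f : (Fin d → ℝ) → ℝ) (H : L2 d →L[ℂ] L2 d) : Prop :=
  ∀ x y : Γd d, ⟪delta x, H (delta y)⟫ = fCoeff f (x - y)

/-- `M` is the operator of multiplication by the potential `V`. -/
def IsMulOp {d : ℕ} (V : Γd d → ℝ) (M : L2 d →L[ℂ] L2 d) : Prop :=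
  ∀ (ψ : L2 d) (x : Γd d), (M ψ : ∀ _ : Γd d, ℂ) x = (V x : ℂ) * (ψ : ∀ _ : Γd d, ℂ) x

/-- Partial derivative `∂_{p_k} f (p)`. -/
def pd {d : ℕ} (f : (Fin d → ℝ) → ℝ) (k : Fin d) (p : Fin d → ℝ) : ℝ :=
  fderiv ℝ f p (Pi.single k 1)

/-- `|∇f|²(p) = Σ_k (∂_{p_k} f(p))²`. -/
def gradSq {d : ℕ} (f : (Fin d → ℝ) → ℝ) (p : Fin d → ℝ) : ℝ := ∑ k, pd f k p ^ 2

/-- The Hessian matrix of `f` at `p`. -/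
def hess {d : ℕ} (f : (Fin d → ℝ) → ℝ) (p : Fin d → ℝ) : Matrix (Fin d) (Fin d) ℝ :=
  Matrix.of fun i j => fderiv ℝ (fun q => fderiv ℝ f q (Pi.single j 1)) p (Pi.single i 1)

/-- All critical points of `f` are nondegenerate (`f` is a Morse function). -/
def IsMorse {d : ℕ} (f : (Fin d → ℝ) → ℝ) : Prop :=
  ∀ p, fderiv ℝ f p = 0 → (hess f p).det ≠ 0

/-- `2πℤ^d`-periodicity. -/
def Periodic2pi {d : ℕ} (f : (Fin d → ℝ) → ℝ) : Prop :=
  ∀ (p : Fin d → ℝ) (m : Γd d), f (p + fun i => 2 * π * (m i : ℝ)) = f p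

/-- A dispersion relation: a `2πℤ^d`-periodic function with minimum `0`. -/
def IsDispersion {d : ℕ} (f : (Fin d → ℝ) → ℝ) : Prop :=
  Periodic2pi f ∧ (∀ p, 0 ≤ f p) ∧ (∃ p, f p = 0)

/-- Condition (M): `𝔢` and `|∇𝔢|²` are Morse functions. -/
def CondM {d : ℕ} (f : (Fin d → ℝ) → ℝ) : Prop := IsMorse f ∧ IsMorse (gradSq f)

/-- `Φ_{m,n}(V) = (Σ_x |V(x)|^{1/m} (1+|x|)^n)^m`, valued in `[0,∞]`. -/
def Phi {d : ℕ} (m n : ℕ) (V : Γd d → ℝ) : ℝ≥0∞ :=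
  (∑' x : Γd d, ENNReal.ofReal (|V x| ^ ((1 : ℝ) / m) * (1 + lnorm x) ^ n)) ^ m

/-- The set of eigenvectors of `H` (with real eigenvalue). -/
def eigvecs {d : ℕ} (H : L2 d →L[ℂ] L2 d) : Set (L2 d) :=
  {ψ : L2 d | ψ ≠ 0 ∧ ∃ μ : ℝ, H ψ = (μ : ℂ) • ψ}

/-- `N_pp[H]`: the Hilbert-space dimension of the closed linear span of all
eigenvectors of `H`. -/
def Npp {d : ℕ} (H : L2 d →L[ℂ] L2 d) : Cardinal :=
  Module.rank ℂ ((Submodule.span ℂ (eigvecs H)).topologicalClosure)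

/-- The Fourier transform `ĝ_x(p) = (i/2·|∇𝔢(p)|² + ⟨∇𝔢(p), x⟩) e^{-i⟨p,x⟩}`. -/
def ghat {d : ℕ} (e : (Fin d → ℝ) → ℝ) (x : Γd d) (p : Fin d → ℝ) : ℂ :=
  ((Complex.I / 2) * ((gradSq e p : ℝ) : ℂ) + ((∑ k, pd e k p * (x k : ℝ) : ℝ) : ℂ)) *
    Complex.exp (-(Complex.I * (dotZ p x : ℝ)))

/-- `g : Γ → ℓ²(Γ)` is the family of vectors `g_x` with Fourier transform `ĝ_x`. -/
def IsGVec {d : ℕ} (e : (Fin d → ℝ) → ℝ) (g : Γd d → L2 d) : Prop :=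
  ∀ x m : Γd d,
    (g x : ∀ _ : Γd d, ℂ) m =
      ((1 / (2 * π) ^ d : ℝ) : ℂ) *
        ∫ p in torusBox d, ghat e x p * Complex.exp (Complex.I * (dotZ p m : ℝ))

/-- `C` is the bounded self-adjoint realization
`C_V = Σ_x i V(x) (|δ_x⟩⟨g_x| - |g_x⟩⟨δ_x|)` of the commutator `i[V, A(𝔢)]`. -/
def IsCommOp {d : ℕ} (V : Γd d → ℝ) (g : Γd d → L2 d) (C : L2 d →L[ℂ] L2 d) : Prop :=
  ∀ ψ : L2 d,
    HasSum (fun x : Γd d =>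
      (Complex.I * (V x : ℂ)) • (⟪g x, ψ⟫ • delta x - ⟪delta x, ψ⟫ • g x)) (C ψ)

/-- `R` is the resolvent `(z - H)^{-1}`. -/
def IsResolventAt {d : ℕ} (H : L2 d →L[ℂ] L2 d) (z : ℂ) (R : L2 d →L[ℂ] L2 d) : Prop :=
  R.comp (z • (1 : L2 d →L[ℂ] L2 d) - H) = 1 ∧ (z • (1 : L2 d →L[ℂ] L2 d) - H).comp R = 1

/-- `‖f‖_{C^m} ≤ C`: all partial derivatives of order `≤ m` are bounded by `C`. -/
def CmNormLe {d : ℕ} (m : ℕ) (f : (Fin d → ℝ) → ℝ) (C : ℝ) : Prop :=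
  ∀ j : ℕ, j ≤ m → ∀ (p : Fin d → ℝ) (k : Fin j → Fin d),
    |iteratedFDeriv ℝ j f p (fun i => Pi.single (k i) 1)| ≤ C

/-- `K(𝔢) ≥ K`: at every critical point, every eigenvalue `λ` of the Hessian
satisfies `|λ|^{1/2} ≥ K`. -/
def MinCurvGe {d : ℕ} (f : (Fin d → ℝ) → ℝ) (K : ℝ) : Prop :=
  ∀ p, fderiv ℝ f p = 0 → ∀ (lam : ℝ) (v : Fin d → ℝ), v ≠ 0 →
    (hess f p).mulVec v = lam • v → K ^ 2 ≤ |lam|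

/-- The set of thresholds `Thr(𝔢) = 𝔢(Crit(𝔢))`. -/
def Thr {d : ℕ} (f : (Fin d → ℝ) → ℝ) : Set ℝ := f '' {p | fderiv ℝ f p = 0}


/-- The number of strictly negative eigenvalues of `C`, counted with multiplicity:
the dimension of the span of eigenvectors with strictly negative eigenvalue. -/
def NegCount {d : ℕ} (C : L2 d →L[ℂ] L2 d) : Cardinal :=
  Module.rank ℂ (Submodule.span ℂ
    {ψ : L2 d | ψ ≠ 0 ∧ ∃ μ : ℝ, μ < 0 ∧ C ψ = (μ : ℂ) • ψ})

/-- The number of strictly positive eigenvalues of `C`, counted with multiplicity. -/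
def PosCount {d : ℕ} (C : L2 d →L[ℂ] L2 d) : Cardinal :=
  Module.rank ℂ (Submodule.span ℂ
    {ψ : L2 d | ψ ≠ 0 ∧ ∃ μ : ℝ, 0 < μ ∧ C ψ = (μ : ℂ) • ψ})



/-! ### Fourier side -/

/-- Normalized measure constant. -/
def vcst (d : ℕ) : ℝ := 1 / (2 * π) ^ d

lemma vcst_pos (d : ℕ) : 0 < vcst d := by unfold vcst; positivity

/-- General Fourier coefficient. -/
def coeff {d : ℕ} (a : (Fin d → ℝ) → ℂ) (m : Γd d) : ℂ :=
  (vcst d : ℂ) * ∫ p in torusBox d, a p * Complex.exp (Complex.I * (dotZ p m : ℝ))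

section torus

local instance instMSCircle : MeasureSpace UnitAddCircle := ⟨AddCircle.haarAddCircle⟩

local instance instHaarCircle : Measure.IsAddHaarMeasure (volume : Measure UnitAddCircle) :=
  inferInstanceAs (Measure.IsAddHaarMeasure AddCircle.haarAddCircle)

local instance instProbCircle : IsProbabilityMeasure (volume : Measure UnitAddCircle) :=
  inferInstanceAs (IsProbabilityMeasure AddCircle.haarAddCircle)

/-- Section of the covering map of the torus, rescaled. -/
def tsec {d : ℕ} (t : UnitAddTorus (Fin d)) : Fin d → ℝ :=
  (-(2 * π)) • fun i => ((AddCircle.equivIoc 1 (-1/2 : ℝ) (t i)).1 : ℝ)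

lemma tsec_measurable {d : ℕ} : Measurable (tsec (d := d)) := by
  unfold tsec
  refine measurable_pi_lambda _ fun i => ?_
  simp only [Pi.smul_apply, smul_eq_mul]
  apply Measurable.const_mul
  exact measurable_subtype_coe.comp
    ((AddCircle.measurableEquivIoc 1 (-1/2 : ℝ)).measurable.comp (measurable_pi_apply i))

lemma tsec_mem {d : ℕ} (t : UnitAddTorus (Fin d)) : tsec t ∈ torusBox d := by
  intro i _
  have h := (AddCircle.equivIoc 1 (-1/2 : ℝ) (t i)).2
  simp only [tsec, Pi.smul_apply, smul_eq_mul, Set.mem_Icc]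
  have := Real.pi_pos
  obtain ⟨h1, h2⟩ := h
  constructor <;> nlinarith

open scoped Pointwise in
lemma torus_int {d : ℕ} (b : (Fin d → ℝ) → ℂ) :
    ∫ t : UnitAddTorus (Fin d), b (tsec t) = (vcst d : ℂ) * ∫ p in torusBox d, b p := by
  rw [UnitAddTorus.integral_preimage _ (fun _ => (-1/2 : ℝ))]
  have hset : {x : Fin d → ℝ | ∀ i, x i ∈ Set.Ioc (-1/2 : ℝ) (-1/2 + 1)}
      = Set.univ.pi fun _ => Set.Ioc (-1/2 : ℝ) (-1/2 + 1) := by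
    ext x; simp
  rw [hset]
  have hms : MeasurableSet (Set.univ.pi fun _ : Fin d => Set.Ioc (-1/2 : ℝ) (-1/2 + 1)) :=
    MeasurableSet.univ_pi fun _ => measurableSet_Ioc
  have h1 : ∫ x in Set.univ.pi fun _ : Fin d => Set.Ioc (-1/2 : ℝ) (-1/2 + 1),
      b (tsec fun i => (x i : UnitAddCircle)) =
      ∫ x in Set.univ.pi fun _ : Fin d => Set.Ioc (-1/2 : ℝ) (-1/2 + 1), b ((-(2*π)) • x) := by
    apply setIntegral_congr_fun hms
    intro x hx
    have : (tsec fun i => (x i : UnitAddCircle)) = (-(2*π)) • x := by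
      unfold tsec
      congr 1
      funext i
      exact AddCircle.equivIoc_coe_of_mem (p := (1:ℝ)) (hx i trivial)
    simp only [this]
  rw [h1, Measure.setIntegral_comp_smul (volume : Measure (Fin d → ℝ)) b _ (by simp [Real.pi_ne_zero])]
  have h2 : (-(2*π)) • (Set.univ.pi fun _ : Fin d => Set.Ioc (-1/2 : ℝ) (-1/2 + 1))
      = Set.univ.pi fun _ : Fin d => Set.Ico (-π) π := by
    have hp := Real.pi_pos
    ext x
    rw [Set.mem_smul_set_iff_inv_smul_mem₀ (by simp [Real.pi_ne_zero])]
    simp only [Set.mem_pi, Set.mem_univ, true_implies, Pi.smul_apply, smul_eq_mul, Set.mem_Ioc,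
      Set.mem_Ico]
    refine forall_congr' fun i => ?_
    have : (-(2*π))⁻¹ * x i = - (x i / (2*π)) := by field_simp
    rw [this, lt_neg, neg_le]
    constructor
    · rintro ⟨h1, h2⟩
      rw [div_lt_iff₀ (by positivity)] at h1
      rw [le_div_iff₀ (by positivity)] at h2
      constructor <;> linarith
    · rintro ⟨h1, h2⟩
      rw [div_lt_iff₀ (by positivity), le_div_iff₀ (by positivity)]
      constructor <;> linarith
  rw [h2]
  have h3 : (Set.univ.pi fun _ : Fin d => Set.Ico (-π) π) =ᵐ[volume] torusBox d := by
    unfold torusBox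
    rw [Set.pi_univ_Icc]
    exact Measure.univ_pi_Ico_ae_eq_Icc
  rw [setIntegral_congr_set h3]
  have h4 : |((-(2*π)) ^ Module.finrank ℝ (Fin d → ℝ))⁻¹| = vcst d := by
    have hp := Real.pi_pos
    rw [Module.finrank_fin_fun, abs_inv, abs_pow, abs_neg, abs_of_pos (by positivity), vcst, one_div]
  rw [h4, Complex.real_smul]

lemma mFourier_tsec {d : ℕ} (m : Γd d) (t : UnitAddTorus (Fin d)) :
    UnitAddTorus.mFourier (-m) t = Complex.exp (Complex.I * (dotZ (tsec t) m : ℝ)) := by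
  simp only [UnitAddTorus.mFourier, ContinuousMap.coe_mk, dotZ]
  push_cast
  rw [Finset.mul_sum, Complex.exp_sum]
  refine Finset.prod_congr rfl fun i _ => ?_
  have h : t i = (((AddCircle.equivIoc 1 (-1/2 : ℝ) (t i)).1 : ℝ) : UnitAddCircle) :=
    ((AddCircle.equivIoc 1 (-1/2 : ℝ)).symm_apply_apply (t i)).symm
  conv_lhs => rw [h]
  rw [fourier_coe_apply]
  congr 1
  simp only [tsec, Pi.smul_apply, smul_eq_mul, Pi.neg_apply]
  push_cast
  ring

lemma memLp_tsec {d : ℕ} {a : (Fin d → ℝ) → ℂ} (ha : Continuous a) :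
    MemLp (fun t : UnitAddTorus (Fin d) => a (tsec t)) 2 := by
  have hK : IsCompact (torusBox d) := isCompact_univ_pi fun _ => isCompact_Icc
  obtain ⟨C, hC⟩ := hK.exists_bound_of_continuousOn ha.continuousOn
  exact MemLp.of_bound (ha.measurable.comp tsec_measurable).aestronglyMeasurable C
    (Filter.Eventually.of_forall fun t => hC _ (tsec_mem t))

lemma repr_tsec {d : ℕ} {a : (Fin d → ℝ) → ℂ} (ha : Continuous a) (m : Γd d) :
    ((UnitAddTorus.mFourierBasis (d := Fin d)).repr ((memLp_tsec ha).toLp _) :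
      ∀ _ : Γd d, ℂ) m = coeff a m := by
  rw [UnitAddTorus.mFourierBasis_repr, UnitAddTorus.mFourierCoeff, coeff, ← torus_int]
  apply integral_congr_ae
  filter_upwards [(memLp_tsec ha).coeFn_toLp] with t ht
  rw [ht, mFourier_tsec, smul_eq_mul, mul_comm]

lemma exists_vec' {d : ℕ} {a : (Fin d → ℝ) → ℂ} (ha : Continuous a) :
    ∃ ψ : L2 d, ∀ m, (ψ : ∀ _ : Γd d, ℂ) m = coeff a m :=
  ⟨_, repr_tsec ha⟩

lemma parseval' {d : ℕ} {a b : (Fin d → ℝ) → ℂ} (ha : Continuous a) (hb : Continuous b)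
    {ψ φ : L2 d} (hψ : ∀ m, (ψ : ∀ _ : Γd d, ℂ) m = coeff a m)
    (hφ : ∀ m, (φ : ∀ _ : Γd d, ℂ) m = coeff b m) :
    ⟪ψ, φ⟫ = (vcst d : ℂ) * ∫ p in torusBox d, (starRingEnd ℂ) (a p) * b p := by
  have e1 : ψ = (UnitAddTorus.mFourierBasis (d := Fin d)).repr ((memLp_tsec ha).toLp _) := by
    ext m; rw [hψ, repr_tsec ha]
  have e2 : φ = (UnitAddTorus.mFourierBasis (d := Fin d)).repr ((memLp_tsec hb).toLp _) := by
    ext m; rw [hφ, repr_tsec hb]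
  rw [e1, e2, LinearIsometryEquiv.inner_map_map, L2.inner_def, ← torus_int]
  apply integral_congr_ae
  filter_upwards [(memLp_tsec ha).coeFn_toLp, (memLp_tsec hb).coeFn_toLp] with t h1 h2
  rw [h1, h2, RCLike.inner_apply, mul_comm]

/-- The character `e^{-i⟨p,y⟩}`. -/
def ex {d : ℕ} (y : Γd d) (p : Fin d → ℝ) : ℂ := Complex.exp (-(Complex.I * (dotZ p y : ℝ)))

lemma dotZ_neg {d : ℕ} (p : Fin d → ℝ) (y : Γd d) : dotZ p (-y) = - dotZ p y := by
  simp [dotZ]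

lemma dotZ_sub {d : ℕ} (p : Fin d → ℝ) (x y : Γd d) : dotZ p (x - y) = dotZ p x - dotZ p y := by
  simp [dotZ, mul_sub]

lemma dotZ_continuous {d : ℕ} (y : Γd d) : Continuous fun p => dotZ p y := by
  unfold dotZ; fun_prop

lemma ex_continuous {d : ℕ} (y : Γd d) : Continuous (ex y) := by
  have := dotZ_continuous y
  unfold ex; fun_prop

lemma delta_coeff {d : ℕ} (y m : Γd d) :
    (delta y : ∀ _ : Γd d, ℂ) m = coeff (ex y) m := by
  rw [← repr_tsec (ex_continuous y)]
  have : (memLp_tsec (ex_continuous y)).toLp _ = UnitAddTorus.mFourierBasis (d := Fin d) y := by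
    rw [UnitAddTorus.coe_mFourierBasis]
    apply Lp.ext
    filter_upwards [(memLp_tsec (ex_continuous y)).coeFn_toLp,
      UnitAddTorus.coeFn_mFourierLp 2 y] with t h1 h2
    rw [h1, h2]
    have := mFourier_tsec (-y) t
    rw [neg_neg] at this
    rw [this, ex, dotZ_neg]
    push_cast
    rw [mul_neg]
  rw [this, HilbertBasis.repr_self]
  rfl

end torus

/-! ### Operators -/

lemma inner_delta {d : ℕ} (x : Γd d) (ψ : L2 d) : ⟪delta x, ψ⟫ = (ψ : ∀ _ : Γd d, ℂ) x := by
  unfold delta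
  rw [lp.inner_single_left]
  simp

lemma clm_ext_delta {d : ℕ} {A B : L2 d →L[ℂ] ℂ} (h : ∀ y, A (delta y) = B (delta y)) : A = B := by
  ext ψ
  have hs := lp.hasSum_single (p := 2) (by norm_num) ψ
  have h1 := A.hasSum hs
  have h2 := B.hasSum hs
  refine h1.unique ?_
  convert h2 using 2 with y
  have : lp.single 2 y ((ψ : ∀ _ : Γd d, ℂ) y) = ((ψ : ∀ _ : Γd d, ℂ) y) • delta y := by
    unfold delta
    rw [← lp.single_smul]; simp
  simp [this, h]

lemma mult_apply {d : ℕ} {f : (Fin d → ℝ) → ℝ} (hf : Continuous f) {G : L2 d →L[ℂ] L2 d}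
    (hG : IsMultiplier f G) {a : (Fin d → ℝ) → ℂ} (ha : Continuous a) {ψ : L2 d}
    (hψ : ∀ m, (ψ : ∀ _ : Γd d, ℂ) m = coeff a m) (m : Γd d) :
    (G ψ : ∀ _ : Γd d, ℂ) m = coeff (fun p => (f p : ℂ) * a p) m := by
  have hfe : Continuous fun p => (f p : ℂ) * ex m p := by
    have := ex_continuous m
    fun_prop
  have hconj : ∀ p, (starRingEnd ℂ) ((f p : ℂ) * ex m p)
      = (f p : ℂ) * Complex.exp (Complex.I * (dotZ p m : ℝ)) := by
    intro p
    rw [map_mul, Complex.conj_ofReal, ex, ← Complex.exp_conj]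
    simp
  obtain ⟨φ, hφ⟩ := exists_vec' hfe
  have key : (innerSL ℂ (delta m)).comp G = innerSL ℂ φ := by
    apply clm_ext_delta
    intro y
    simp only [ContinuousLinearMap.comp_apply, innerSL_apply_apply]
    rw [hG, parseval' hfe (ex_continuous y) hφ (delta_coeff y), fCoeff, vcst]
    congr 2
    ext p
    rw [hconj, ex, mul_assoc, ← Complex.exp_add, dotZ_sub]
    congr 2
    push_cast; ring
  have h2 := congrArg (fun A : L2 d →L[ℂ] ℂ => A ψ) key
  simp only [ContinuousLinearMap.comp_apply, innerSL_apply_apply] at h2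
  rw [← inner_delta, h2, parseval' hfe ha hφ hψ, coeff]
  congr 2
  ext p
  rw [hconj]; ring

lemma sub_ne_zero_of_im {z : ℂ} (hz : z.im ≠ 0) (t : ℝ) : z - (t : ℂ) ≠ 0 := by
  intro h
  apply hz
  have := congrArg Complex.im h
  simpa using this

lemma coeff_sub {d : ℕ} {a b : (Fin d → ℝ) → ℂ} (ha : Continuous a) (hb : Continuous b)
    (m : Γd d) : coeff (fun p => a p - b p) m = coeff a m - coeff b m := by
  have hK : IsCompact (torusBox d) := isCompact_univ_pi fun _ => isCompact_Icc
  have hd := dotZ_continuous m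
  unfold coeff
  simp only [sub_mul]
  rw [integral_sub, mul_sub]
  · exact (Continuous.continuousOn (by fun_prop)).integrableOn_compact hK
  · exact (Continuous.continuousOn (by fun_prop)).integrableOn_compact hK

lemma coeff_smul {d : ℕ} (c : ℂ) (a : (Fin d → ℝ) → ℂ)
    (m : Γd d) : coeff (fun p => c * a p) m = c * coeff a m := by
  unfold coeff
  simp only [mul_assoc]
  rw [integral_const_mul]; ring

lemma free_resolvent {d : ℕ} {f : (Fin d → ℝ) → ℝ} (hf : Continuous f) {G : L2 d →L[ℂ] L2 d}
    (hG : IsMultiplier f G) {b : (Fin d → ℝ) → ℂ} (hb : Continuous b) {φ : L2 d}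
    (hφ : ∀ m, (φ : ∀ _ : Γd d, ℂ) m = coeff b m) {z : ℂ} (hz : z.im ≠ 0) :
    ∃ r : L2 d, (∀ m, (r : ∀ _ : Γd d, ℂ) m = coeff (fun p => b p / (z - (f p : ℂ))) m) ∧
      z • r - G r = φ := by
  have hc : Continuous fun p => b p / (z - (f p : ℂ)) :=
    hb.div (by fun_prop) fun p => sub_ne_zero_of_im hz _
  obtain ⟨r, hr⟩ := exists_vec' hc
  refine ⟨r, hr, ?_⟩
  ext m
  have h1 := mult_apply hf hG hc hr m
  have h2 : (z • r - G r : L2 d) m = z * (r : ∀ _ : Γd d, ℂ) m - (G r : ∀ _ : Γd d, ℂ) m := rfl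
  rw [h2, h1, hr, hφ, ← coeff_smul, ← coeff_sub (by fun_prop) (by fun_prop)]
  congr 1
  funext p
  have := sub_ne_zero_of_im hz (f p)
  field_simp

lemma absorb {d : ℕ} {V : Γd d → ℝ} {g : Γd d → L2 d} {G C R : L2 d →L[ℂ] L2 d} {z : ℂ}
    (hR : R.comp (z • (1 : L2 d →L[ℂ] L2 d) - (G + C)) = 1) (hC : IsCommOp V g C)
    {ω : Γd d → ℝ} (hω : ∀ x, 1 ≤ ω x) {K : ℝ} (hK : 0 < K)
    (hr : ∀ w, ∀ v : L2 d, (v = delta w ∨ v = g w) → ∃ r, z • r - G r = v ∧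
      ∀ u, ‖⟪delta u, r⟫‖ ≤ K * ω u * ω w ∧ ‖⟪g u, r⟫‖ ≤ K * ω u * ω w)
    {C0 : ℝ} (hg : ∀ w, ‖g w‖ ≤ C0 * ω w)
    (hV : Summable fun w => |V w| * ω w ^ 2) (hV2 : 4 * K * ∑' w, |V w| * ω w ^ 2 ≤ 1)
    (x y : Γd d) : ‖⟪delta x, R (delta y)⟫‖ ≤ 2 * K * ω x * ω y := by
  have hω0 : ∀ x, 0 < ω x := fun x => lt_of_lt_of_le one_pos (hω x)
  set A : L2 d →L[ℂ] ℂ := (innerSL ℂ (delta x)).comp R with hA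
  have hdel : ∀ w : Γd d, ‖delta w‖ = 1 := by
    intro w; unfold delta; rw [lp.norm_single (by norm_num)]; simp
  set q : Γd d → ℝ := fun w => max ‖A (delta w)‖ ‖A (g w)‖ / ω w with hq
  have hbdd : BddAbove (Set.range q) := by
    refine ⟨‖A‖ * (1 + |C0|), ?_⟩
    rintro _ ⟨w, rfl⟩
    simp only [hq]
    rw [div_le_iff₀ (hω0 w), mul_assoc]
    apply max_le
    · refine (A.le_opNorm _).trans (mul_le_mul_of_nonneg_left ?_ (norm_nonneg _))
      rw [hdel]
      nlinarith [hω w, abs_nonneg C0, hω0 w]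
    · refine (A.le_opNorm _).trans (mul_le_mul_of_nonneg_left ?_ (norm_nonneg _))
      refine (hg w).trans ?_
      nlinarith [hω w, abs_nonneg C0, hω0 w, le_abs_self C0]
  set S := ⨆ w, q w with hS
  have hqS : ∀ w, q w ≤ S := fun w => le_ciSup hbdd w
  have hS1 : ∀ w, ‖A (delta w)‖ ≤ S * ω w := fun w => by
    have := hqS w
    simp only [hq] at this
    rw [div_le_iff₀ (hω0 w)] at this
    exact (le_max_left _ _).trans this
  have hS2 : ∀ w, ‖A (g w)‖ ≤ S * ω w := fun w => by
    have := hqS w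
    simp only [hq] at this
    rw [div_le_iff₀ (hω0 w)] at this
    exact (le_max_right _ _).trans this
  have hS0 : 0 ≤ S := by
    refine le_trans ?_ (hqS x)
    simp only [hq]
    exact div_nonneg (le_trans (norm_nonneg _) (le_max_left _ _)) (hω0 x).le
  have main : ∀ w, ∀ v : L2 d, (v = delta w ∨ v = g w) → ‖A v‖ ≤ (K * ω x + S / 2) * ω w := by
    intro w v hv
    obtain ⟨r, hr1, hr2⟩ := hr w v hv
    have e1 : A v = ⟪delta x, r⟫ - A (C r) * (-1) := by
      have h := congrArg (fun T : L2 d →L[ℂ] L2 d => T r) hR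
      simp only [ContinuousLinearMap.comp_apply] at h
      have h3 : (z • (1 : L2 d →L[ℂ] L2 d) - (G + C)) r = v - C r := by
        rw [← hr1]
        simp
        abel
      rw [h3, map_sub] at h
      have h4 : R v = r + R (C r) := by
        rw [← sub_eq_iff_eq_add]; simpa using h
      simp only [hA, ContinuousLinearMap.comp_apply, innerSL_apply_apply, h4, inner_add_right]
      ring
    have hsum := A.hasSum (hC r)
    have hb : ‖A (C r)‖ ≤ 2 * K * S * ω w * ∑' u, |V u| * ω u ^ 2 := by
      rw [← hsum.tsum_eq]
      refine tsum_of_norm_bounded (hV.hasSum.mul_left (2 * K * S * ω w)) ?_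
      intro u
      have t1 := (hr2 u).1
      have t2 := (hr2 u).2
      have t3 := hS1 u
      have t4 := hS2 u
      rw [map_smul, map_sub, map_smul, map_smul, norm_smul]
      have n1 : ‖Complex.I * (V u : ℂ)‖ = |V u| := by simp
      rw [n1]
      have hKω : 0 ≤ K * ω u * ω w := by have := hω0 u; have := hω0 w; positivity
      have n2 : ‖⟪g u, r⟫ • A (delta u) - ⟪delta u, r⟫ • A (g u)‖ ≤
          K * ω u * ω w * (S * ω u) + K * ω u * ω w * (S * ω u) := by
        refine (norm_sub_le _ _).trans (add_le_add ?_ ?_)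
        · rw [norm_smul]; exact mul_le_mul t2 t3 (norm_nonneg _) hKω
        · rw [norm_smul]; exact mul_le_mul t1 t4 (norm_nonneg _) hKω
      calc |V u| * ‖_‖ ≤ |V u| * _ := mul_le_mul_of_nonneg_left n2 (abs_nonneg _)
        _ = _ := by ring
    have hx := (hr2 x).1
    have hw := hω0 w
    have hfin : 2 * K * S * ω w * ∑' u, |V u| * ω u ^ 2 ≤ S / 2 * ω w := by
      have : 0 ≤ S * ω w := by positivity
      nlinarith
    rw [e1]
    refine (norm_sub_le _ _).trans ?_
    rw [norm_mul, norm_neg, norm_one, mul_one]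
    linarith
  have hSle : S ≤ K * ω x + S / 2 := by
    haveI : Nonempty (Γd d) := ⟨x⟩
    refine ciSup_le fun w => ?_
    simp only [hq]
    rw [div_le_iff₀ (hω0 w)]
    exact max_le (main w _ (Or.inl rfl)) (main w _ (Or.inr rfl))
  have h5 := hS1 y
  have h6 : S ≤ 2 * K * ω x := by linarith
  calc ‖⟪delta x, R (delta y)⟫‖ = ‖A (delta y)‖ := rfl
    _ ≤ S * ω y := h5
    _ ≤ _ := mul_le_mul_of_nonneg_right h6 (hω0 y).le

/-! ### Integration by parts on the torus -/

/-- Periodicity for functions with arbitrary values. -/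
def Per {d : ℕ} {E : Type*} (F : (Fin d → ℝ) → E) : Prop :=
  ∀ (p : Fin d → ℝ) (m : Γd d), F (p + fun i => 2 * π * (m i : ℝ)) = F p

lemma Per.fderiv {d : ℕ} {E : Type*} [NormedAddCommGroup E] [NormedSpace ℝ E]
    {F : (Fin d → ℝ) → E} (h : Per F) : Per (fderiv ℝ F) := by
  intro p m
  have : (fun x => F (x + fun i => 2 * π * (m i : ℝ))) = F := by
    funext x; exact h x m
  rw [← fderiv_comp_add_right, this]

lemma Per.pd {d : ℕ} {f : (Fin d → ℝ) → ℝ} (h : Per f) (k : Fin d) : Per (pd f k) := by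
  intro p m
  simp only [LatSch.pd]
  rw [h.fderiv p m]

lemma Per.gradSq {d : ℕ} {f : (Fin d → ℝ) → ℝ} (h : Per f) : Per (gradSq f) := by
  intro p m
  simp only [LatSch.gradSq]
  exact Finset.sum_congr rfl fun k _ => by rw [h.pd k p m]

lemma isCompact_torusBox (d : ℕ) : IsCompact (torusBox d) :=
  isCompact_univ_pi fun _ => isCompact_Icc

lemma measurableSet_torusBox (d : ℕ) : MeasurableSet (torusBox d) :=
  (isCompact_torusBox d).isClosed.measurableSet

lemma int_div_zero {d : ℕ} (F : Fin d → (Fin d → ℝ) → ℂ) (hF : ∀ k, ContDiff ℝ 1 (F k))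
    (hP : ∀ k, Per (F k)) :
    ∫ p in torusBox d, ∑ k, fderiv ℝ (F k) p (Pi.single k 1) = 0 := by
  cases d with
  | zero => simp
  | succ n =>
    have hbox : torusBox (n+1) = Set.Icc (fun _ => -π) (fun _ => π) := by
      unfold torusBox; rw [Set.pi_univ_Icc]
    rw [hbox]
    have hc : Continuous fun p => ∑ k, fderiv ℝ (F k) p (Pi.single k 1) := by
      refine continuous_finsetSum _ fun k _ => ?_
      exact ((hF k).continuous_fderiv (by norm_num)).clm_apply continuous_const
    have := integral_divergence_of_hasFDerivAt_off_countable' (fun _ => -π) (fun _ => π)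
      (fun i => by have := Real.pi_pos; simp only; linarith) F (fun k p => fderiv ℝ (F k) p) ∅
      Set.countable_empty
      (fun i => (hF i).continuous.continuousOn)
      (fun x _ i => ((hF i).differentiable (by norm_num) x).hasFDerivAt)
      (hc.continuousOn.integrableOn_compact isCompact_Icc)
    rw [this]
    apply Finset.sum_eq_zero
    intro i _
    rw [sub_eq_zero]
    congr 1
    funext x
    have h := hP i (Fin.insertNth i (-π) x) (Pi.single i 1)
    rw [← h]
    congr 1
    funext j
    rcases Fin.eq_self_or_eq_succAbove i j with rfl | ⟨l, rfl⟩
    · simp; ring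
    · simp

/-- Admissible test functions: periodic, `C¹`, with `C¹` norm at most `M`. -/
structure Adm {d : ℕ} (u : (Fin d → ℝ) → ℂ) (M : ℝ) : Prop where
  smooth : ContDiff ℝ 1 u
  per : Per u
  bd : ∀ p ∈ torusBox d, ‖u p‖ ≤ M
  bd' : ∀ p ∈ torusBox d, ∀ k, ‖fderiv ℝ u p (Pi.single k 1)‖ ≤ M

lemma contDiff_pd {d : ℕ} {n : ℕ} {f : (Fin d → ℝ) → ℝ} (hf : ContDiff ℝ (n + 1 : ℕ) f) (k : Fin d) :
    ContDiff ℝ n (pd f k) := by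
  unfold pd
  exact (hf.fderiv_right (m := n) (by norm_cast)).clm_apply contDiff_const

lemma contDiff_gradSq {d : ℕ} {n : ℕ} {f : (Fin d → ℝ) → ℝ} (hf : ContDiff ℝ (n + 1 : ℕ) f) :
    ContDiff ℝ n (gradSq f) := by
  unfold gradSq
  exact ContDiff.sum fun k _ => (contDiff_pd hf k).pow 2

lemma gradSq_nonneg {d : ℕ} (f : (Fin d → ℝ) → ℝ) (p : Fin d → ℝ) : 0 ≤ gradSq f p :=
  Finset.sum_nonneg fun _ _ => sq_nonneg _

lemma exists_bd {d : ℕ} {f : (Fin d → ℝ) → ℝ} (hf : ContDiff ℝ 2 f) :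
    ∃ B : ℝ, 0 ≤ B ∧ ∀ p ∈ torusBox d, (∀ k, |pd f k p| ≤ B) ∧
      ∀ j k, |fderiv ℝ (pd f k) p (Pi.single j 1)| ≤ B := by
  have h1 : ∀ k, ContDiff ℝ 1 (pd f k) := fun k => contDiff_pd (n := 1) hf k
  have hc : Continuous fun p => ∑ k, |pd f k p| +
      ∑ k, ∑ j, |fderiv ℝ (pd f k) p (Pi.single j 1)| := by
    refine (continuous_finsetSum _ fun k _ => (h1 k).continuous.abs).add ?_
    refine continuous_finsetSum _ fun k _ => continuous_finsetSum _ fun j _ => ?_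
    exact (((h1 k).continuous_fderiv (by norm_num)).clm_apply continuous_const).abs
  obtain ⟨B, hB⟩ := (isCompact_torusBox d).exists_bound_of_continuousOn hc.continuousOn
  refine ⟨|B|, abs_nonneg _, fun p hp => ?_⟩
  have h := (le_abs_self _).trans ((hB p hp).trans (le_abs_self B))
  have n1 : 0 ≤ ∑ k, |pd f k p| := Finset.sum_nonneg fun _ _ => abs_nonneg _
  have n2 : 0 ≤ ∑ k, ∑ j, |fderiv ℝ (pd f k) p (Pi.single j 1)| :=
    Finset.sum_nonneg fun _ _ => Finset.sum_nonneg fun _ _ => abs_nonneg _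
  constructor
  · intro k
    have := Finset.single_le_sum (f := fun k => |pd f k p|) (fun _ _ => abs_nonneg _)
      (Finset.mem_univ k)
    linarith
  · intro j k
    have t1 := Finset.single_le_sum (f := fun j => |fderiv ℝ (pd f k) p (Pi.single j 1)|)
      (fun _ _ => abs_nonneg _) (Finset.mem_univ j)
    have t2 := Finset.single_le_sum
      (f := fun k => ∑ j, |fderiv ℝ (pd f k) p (Pi.single j 1)|)
      (fun _ _ => Finset.sum_nonneg fun _ _ => abs_nonneg _) (Finset.mem_univ k)
    linarith

lemma ibp {d : ℕ} {f : (Fin d → ℝ) → ℝ} (hf : ContDiff ℝ 2 f) (hP : Per f) :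
    ∃ Cf : ℝ, 0 ≤ Cf ∧ ∀ (u : (Fin d → ℝ) → ℂ) (M : ℝ), Adm u M →
      ∀ φ φ' : ℝ → ℂ, (∀ t, HasDerivAt φ (φ' t) t) → Continuous φ' → ∀ δ : ℝ, 0 < δ →
      ‖∫ p in torusBox d, (gradSq f p / (gradSq f p + δ)) • (u p * φ' (f p))‖ ≤
        Cf * M * ∫ p in torusBox d, ‖φ (f p)‖ * (gradSq f p + δ)⁻¹ := by
  obtain ⟨B, hB0, hB⟩ := exists_bd hf
  refine ⟨d * (2 * B + 2 * d * B), by positivity, ?_⟩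
  intro u M hu φ φ' hφ hφ' δ hδ
  have h1 : ∀ k, ContDiff ℝ 1 (pd f k) := fun k => contDiff_pd (n := 1) hf k
  have hN : ContDiff ℝ 1 (gradSq f) := contDiff_gradSq (n := 1) hf
  have hf1 : ContDiff ℝ 1 f := hf.of_le (by norm_num)
  have hDpos : ∀ p, 0 < gradSq f p + δ := fun p => by have := gradSq_nonneg f p; linarith
  have hφd : deriv φ = φ' := funext fun t => (hφ t).deriv
  have hφ1 : ContDiff ℝ 1 φ := by
    rw [contDiff_one_iff_deriv, hφd]
    exact ⟨fun t => (hφ t).differentiableAt, hφ'⟩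
  have hDinv : ContDiff ℝ 1 fun p => (gradSq f p + δ)⁻¹ :=
    (hN.add contDiff_const).inv fun p => (hDpos p).ne'
  set F : Fin d → (Fin d → ℝ) → ℂ :=
    fun k p => (pd f k p * (gradSq f p + δ)⁻¹) • (u p * φ (f p)) with hF
  have hFs : ∀ k, ContDiff ℝ 1 (F k) := fun k =>
    ((h1 k).mul hDinv).smul (hu.smooth.mul (hφ1.comp hf1))
  have hFP : ∀ k, Per (F k) := by
    intro k p m
    simp only [hF]
    rw [hP.pd k p m, hP.gradSq p m, hu.per p m, hP p m]
  set Q : (Fin d → ℝ) → ℂ := fun p => ∑ k,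
    ((pd f k p * (gradSq f p + δ)⁻¹) • fderiv ℝ u p (Pi.single k 1) +
      (fderiv ℝ (pd f k) p (Pi.single k 1) * (gradSq f p + δ)⁻¹ -
        pd f k p * fderiv ℝ (gradSq f) p (Pi.single k 1) * ((gradSq f p + δ) ^ 2)⁻¹) • u p) with hQ
  have hsum : ∀ p, ∑ k, fderiv ℝ (F k) p (Pi.single k 1) =
      Q p * φ (f p) + (gradSq f p / (gradSq f p + δ)) • (u p * φ' (f p)) := by
    intro p
    have hterm : ∀ k, fderiv ℝ (F k) p (Pi.single k 1) =
        ((pd f k p * (gradSq f p + δ)⁻¹) • fderiv ℝ u p (Pi.single k 1) +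
      (fderiv ℝ (pd f k) p (Pi.single k 1) * (gradSq f p + δ)⁻¹ -
        pd f k p * fderiv ℝ (gradSq f) p (Pi.single k 1) * ((gradSq f p + δ) ^ 2)⁻¹) • u p)
        * φ (f p) + (pd f k p ^ 2 * (gradSq f p + δ)⁻¹) • (u p * φ' (f p)) := by
      intro k
      have a1 := ((h1 k).differentiable (by norm_num) p).hasFDerivAt
      have a2 := (hN.differentiable (by norm_num) p).hasFDerivAt
      have a3 := (hu.smooth.differentiable (by norm_num) p).hasFDerivAt
      have a4 := (hf1.differentiable (by norm_num) p).hasFDerivAt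
      have a5 := (hφ (f p)).hasFDerivAt.comp p a4
      have a6 := (hasDerivAt_inv (hDpos p).ne').comp_hasFDerivAt p (a2.add_const δ)
      have a7 := (a1.mul a6).smul (a3.mul a5)
      have a8 : fderiv ℝ (F k) p = _ := a7.fderiv
      rw [a8]
      have hpd : fderiv ℝ f p (Pi.single k 1) = pd f k p := rfl
      simp [hpd]
      ring
    rw [Finset.sum_congr rfl fun k _ => hterm k, Finset.sum_add_distrib, ← Finset.sum_mul,
      ← Finset.sum_smul, ← Finset.sum_mul]
    rfl
  have hQc : Continuous Q := by
    simp only [hQ]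
    refine continuous_finsetSum _ fun k _ => ?_
    have c1 := (h1 k).continuous
    have c2 := hDinv.continuous
    have c3 : Continuous fun p => fderiv ℝ u p (Pi.single k 1) :=
      (hu.smooth.continuous_fderiv (by norm_num)).clm_apply continuous_const
    have c4 : Continuous fun p => fderiv ℝ (pd f k) p (Pi.single k 1) :=
      ((h1 k).continuous_fderiv (by norm_num)).clm_apply continuous_const
    have c5 : Continuous fun p => fderiv ℝ (gradSq f) p (Pi.single k 1) :=
      (hN.continuous_fderiv (by norm_num)).clm_apply continuous_const
    have c6 := hu.smooth.continuous
    have c7 : Continuous fun p => ((gradSq f p + δ) ^ 2)⁻¹ :=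
      ((hN.continuous.add continuous_const).pow 2).inv₀ fun p => (pow_pos (hDpos p) 2).ne'
    exact ((c1.mul c2).smul c3).add (((c4.mul c2).sub ((c1.mul c5).mul c7)).smul c6)
  have hφf : Continuous fun p => φ (f p) := hφ1.continuous.comp hf1.continuous
  have hdiv : Continuous fun p => gradSq f p / (gradSq f p + δ) :=
    hN.continuous.div (hN.continuous.add continuous_const) fun p => (hDpos p).ne'
  have hIntg := int_div_zero F hFs hFP
  simp only [hsum] at hIntg
  have i1 : IntegrableOn (fun p => Q p * φ (f p)) (torusBox d) :=
    (hQc.mul hφf).continuousOn.integrableOn_compact (isCompact_torusBox d)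
  have i2 : IntegrableOn (fun p => (gradSq f p / (gradSq f p + δ)) • (u p * φ' (f p)))
      (torusBox d) :=
    (hdiv.smul (hu.smooth.continuous.mul
      (hφ'.comp hf1.continuous))).continuousOn.integrableOn_compact (isCompact_torusBox d)
  rw [integral_add i1 i2] at hIntg
  have heq := eq_neg_of_add_eq_zero_right hIntg
  rw [heq, norm_neg, ← integral_const_mul]
  apply norm_integral_le_of_norm_le
  · exact ((hφf.norm.mul hDinv.continuous).const_mul _).continuousOn.integrableOn_compact
      (isCompact_torusBox d)
  · rw [ae_restrict_iff' (measurableSet_torusBox d)]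
    refine Filter.Eventually.of_forall fun p hp => ?_
    rw [norm_mul]
    obtain ⟨b1, b2⟩ := hB p hp
    have hM0 : 0 ≤ M := (norm_nonneg _).trans (hu.bd p hp)
    set D := gradSq f p + δ with hD
    have hD0 : 0 < D := hDpos p
    have hND : gradSq f p ≤ D := by rw [hD]; linarith
    have hterm : ∀ k, ‖(pd f k p * D⁻¹) • fderiv ℝ u p (Pi.single k 1) +
      (fderiv ℝ (pd f k) p (Pi.single k 1) * D⁻¹ -
        pd f k p * fderiv ℝ (gradSq f) p (Pi.single k 1) * (D ^ 2)⁻¹) • u p‖ ≤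
        M * (2 * B + 2 * d * B) * D⁻¹ := by
      intro k
      have g1 : |pd f k p * fderiv ℝ (gradSq f) p (Pi.single k 1)| ≤ 2 * d * B * D := by
        have e1 : fderiv ℝ (gradSq f) p (Pi.single k 1) =
            ∑ j, 2 * pd f j p * fderiv ℝ (pd f j) p (Pi.single k 1) := by
          have : HasFDerivAt (gradSq f) (∑ j, (2 * pd f j p) • fderiv ℝ (pd f j) p) p := by
            unfold gradSq
            refine HasFDerivAt.fun_sum fun j _ => ?_
            have := ((h1 j).differentiable (by norm_num) p).hasFDerivAt.pow 2
            simpa using this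
          rw [this.fderiv]
          simp
        rw [e1, Finset.mul_sum]
        refine (Finset.abs_sum_le_sum_abs _ _).trans ?_
        have e2 : ∀ j ∈ Finset.univ, |pd f k p * (2 * pd f j p * fderiv ℝ (pd f j) p (Pi.single k 1))|
            ≤ 2 * B * D := by
          intro j _
          have s1 : ∀ i, pd f i p ^ 2 ≤ D := fun i =>
            (Finset.single_le_sum (f := fun i => pd f i p ^ 2) (fun _ _ => sq_nonneg _)
              (Finset.mem_univ i)).trans hND
          have s2 : |pd f k p| * |pd f j p| ≤ D := by
            have := s1 k; have := s1 j
            have := sq_abs (pd f k p); have := sq_abs (pd f j p)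
            nlinarith [sq_nonneg (|pd f k p| - |pd f j p|)]
          have s3 := b2 k j
          rw [abs_mul, abs_mul, abs_mul, abs_two]
          calc _ = 2 * ((|pd f k p| * |pd f j p|) * |fderiv ℝ (pd f j) p (Pi.single k 1)|) := by ring
            _ ≤ 2 * (D * B) := by
              apply mul_le_mul_of_nonneg_left _ zero_le_two
              exact mul_le_mul s2 s3 (abs_nonneg _) hD0.le
            _ = _ := by ring
        refine (Finset.sum_le_sum e2).trans ?_
        simp
        linarith
      have t1 : ‖(pd f k p * D⁻¹) • fderiv ℝ u p (Pi.single k 1)‖ ≤ B * D⁻¹ * M := by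
        rw [norm_smul, Real.norm_eq_abs, abs_mul, abs_of_pos (inv_pos.2 hD0)]
        exact mul_le_mul (mul_le_mul_of_nonneg_right (b1 k) (inv_pos.2 hD0).le) (hu.bd' p hp k)
          (norm_nonneg _) (by positivity)
      have t2 : |fderiv ℝ (pd f k) p (Pi.single k 1) * D⁻¹ -
        pd f k p * fderiv ℝ (gradSq f) p (Pi.single k 1) * (D ^ 2)⁻¹| ≤
          B * D⁻¹ + 2 * d * B * D⁻¹ := by
        refine (abs_sub _ _).trans (add_le_add ?_ ?_)
        · rw [abs_mul, abs_of_pos (inv_pos.2 hD0)]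
          exact mul_le_mul_of_nonneg_right (b2 k k) (inv_pos.2 hD0).le
        · rw [abs_mul, abs_of_pos (inv_pos.2 (pow_pos hD0 2))]
          calc _ ≤ 2 * d * B * D * (D^2)⁻¹ :=
                mul_le_mul_of_nonneg_right g1 (inv_pos.2 (pow_pos hD0 2)).le
            _ = _ := by field_simp
      refine (norm_add_le _ _).trans ?_
      rw [norm_smul (_ - _), Real.norm_eq_abs]
      have t3 := mul_le_mul t2 (hu.bd p hp) (norm_nonneg _) (by positivity)
      calc _ ≤ B * D⁻¹ * M + (B * D⁻¹ + 2 * d * B * D⁻¹) * M := add_le_add t1 t3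
        _ = _ := by ring
    have hQb : ‖Q p‖ ≤ d * (M * (2 * B + 2 * d * B) * D⁻¹) := by
      simp only [hQ]
      refine (norm_sum_le _ _).trans ((Finset.sum_le_sum fun k _ => hterm k).trans ?_)
      simp
    calc ‖Q p‖ * ‖φ (f p)‖ ≤ _ := mul_le_mul_of_nonneg_right hQb (norm_nonneg _)
      _ = _ := by ring

/-! ### Integrability near nondegenerate critical points -/

lemma fderiv_zero_of_gradSq {d : ℕ} {f : (Fin d → ℝ) → ℝ} {p : Fin d → ℝ}
    (h : gradSq f p = 0) : fderiv ℝ f p = 0 := by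
  unfold gradSq at h
  rw [Finset.sum_eq_zero_iff_of_nonneg (fun _ _ => sq_nonneg _)] at h
  apply ContinuousLinearMap.coe_injective
  apply LinearMap.pi_ext'
  intro k
  ext
  have := pow_eq_zero_iff (two_ne_zero) |>.1 (h k (Finset.mem_univ k))
  simpa [pd] using this

lemma morse_lower {d : ℕ} {f : (Fin d → ℝ) → ℝ} (hf : ContDiff ℝ 2 f) (hM : IsMorse f)
    {p₀ : Fin d → ℝ} (h0 : gradSq f p₀ = 0) :
    ∃ c : ℝ, 0 < c ∧ ∀ᶠ p in nhds p₀, c * ‖p - p₀‖ ^ 2 ≤ gradSq f p := by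
  have h1 : ∀ k, ContDiff ℝ 1 (pd f k) := fun k => contDiff_pd (n := 1) hf k
  have hfd := fderiv_zero_of_gradSq h0
  have hdet := hM p₀ hfd
  set L : (Fin d → ℝ) →L[ℝ] (Fin d → ℝ) :=
    ContinuousLinearMap.pi fun k => fderiv ℝ (pd f k) p₀ with hL
  have hder : HasFDerivAt (fun p => fun k => pd f k p) L p₀ :=
    hasFDerivAt_pi.2 fun k => ((h1 k).differentiable (by norm_num) p₀).hasFDerivAt
  have hLv : ∀ v, L v = Matrix.vecMul v (hess f p₀) := by
    intro v
    funext j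
    have hv : v = ∑ i, v i • (Pi.single i 1 : Fin d → ℝ) := by
      conv_lhs => rw [pi_eq_sum_univ' v]
    have : L v j = fderiv ℝ (pd f j) p₀ v := rfl
    rw [this]
    conv_lhs => rw [hv]
    rw [map_sum]
    simp only [Matrix.vecMul, dotProduct, map_smul, smul_eq_mul, hess, Matrix.of_apply]
    rfl
  have hker : LinearMap.ker (L : (Fin d → ℝ) →ₗ[ℝ] (Fin d → ℝ)) = ⊥ := by
    rw [LinearMap.ker_eq_bot']
    intro v hv
    have : Matrix.vecMul v (hess f p₀) = 0 := by rw [← hLv]; exact hv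
    exact Matrix.eq_zero_of_vecMul_eq_zero hdet this
  obtain ⟨C, hC0, hC⟩ := LinearMap.exists_antilipschitzWith _ hker
  have hC' : ∀ v, ‖v‖ ≤ C * ‖L v‖ := by
    intro v
    have := hC.le_mul_dist v 0
    simpa using this
  have hCp : (0:ℝ) < C := hC0
  have hlit := (hasFDerivAt_iff_isLittleO.1 hder).def (c := (2 * (C:ℝ))⁻¹) (by positivity)
  refine ⟨(2 * (C:ℝ))⁻¹ ^ 2, by positivity, ?_⟩
  filter_upwards [hlit] with p hp
  have hg0 : (fun k => pd f k p₀) = 0 := by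
    funext k
    simp [pd, hfd]
  simp only [hg0, sub_zero] at hp
  set gp : Fin d → ℝ := fun k => pd f k p with hgp
  have e1 := hC' (p - p₀)
  have e2 : ‖L (p - p₀)‖ ≤ ‖gp‖ + (2 * (C:ℝ))⁻¹ * ‖p - p₀‖ := by
    have := norm_sub_norm_le (L (p - p₀)) gp
    rw [norm_sub_rev] at this
    linarith
  have e3 : (2 * (C:ℝ))⁻¹ * ‖p - p₀‖ ≤ ‖gp‖ := by
    have e4 : (C:ℝ)⁻¹ * ‖p - p₀‖ ≤ ‖L (p - p₀)‖ := by
      rw [inv_mul_le_iff₀ hCp]; exact e1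
    have e5 : (2 * (C:ℝ))⁻¹ = (C:ℝ)⁻¹ / 2 := by rw [mul_inv]; ring
    rw [e5] at e2 ⊢
    linarith
  have e6 : ‖gp‖ ^ 2 ≤ gradSq f p := by
    have : ‖gp‖ ≤ Real.sqrt (gradSq f p) := by
      rw [pi_norm_le_iff_of_nonneg (Real.sqrt_nonneg _)]
      intro k
      rw [Real.norm_eq_abs]
      apply Real.abs_le_sqrt
      exact Finset.single_le_sum (f := fun i => pd f i p ^ 2) (fun _ _ => sq_nonneg _)
              (Finset.mem_univ k)
    calc ‖gp‖ ^ 2 ≤ Real.sqrt (gradSq f p) ^ 2 := pow_le_pow_left₀ (norm_nonneg _) this 2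
      _ = _ := Real.sq_sqrt (gradSq_nonneg f p)
  calc _ = ((2 * (C:ℝ))⁻¹ * ‖p - p₀‖) ^ 2 := by ring
    _ ≤ ‖gp‖ ^ 2 := pow_le_pow_left₀ (by positivity) e3 2
    _ ≤ _ := e6

lemma gradSq_ae_ne {d : ℕ} (hd : 3 ≤ d) {f : (Fin d → ℝ) → ℝ} (hf : ContDiff ℝ 2 f)
    (hM : IsMorse f) : ∀ᵐ p : Fin d → ℝ, gradSq f p ≠ 0 := by
  have hne : Nonempty (Fin d) := ⟨⟨0, by omega⟩⟩
  rw [ae_iff]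
  simp only [not_not]
  apply measure_null_of_locally_null
  intro p hp
  obtain ⟨c, hc, hev⟩ := morse_lower hf hM hp
  refine ⟨{p}, ?_, measure_singleton p⟩
  rw [mem_nhdsWithin_iff_eventually]
  filter_upwards [hev] with q hq hq0
  have hq0' : gradSq f q = 0 := hq0
  rw [hq0'] at hq
  have : ‖q - p‖ ^ 2 = 0 := by
    have h1 := sq_nonneg ‖q - p‖
    nlinarith
  have h2 := pow_eq_zero_iff (two_ne_zero) |>.1 this
  rw [norm_eq_zero, sub_eq_zero] at h2
  exact h2

lemma gradSq_integrable {d : ℕ} (hd : 3 ≤ d) {f : (Fin d → ℝ) → ℝ} (hf : ContDiff ℝ 2 f)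
    (hM : IsMorse f) :
    IntegrableOn (fun p => gradSq f p ^ (-(5/4) : ℝ)) (torusBox d) := by
  have hN : Continuous (gradSq f) := (contDiff_gradSq (n := 1) hf).continuous
  have hmeas : Measurable fun p => gradSq f p ^ (-(5/4) : ℝ) := hN.measurable.pow_const _
  refine LocallyIntegrable.integrableOn_isCompact ?_ (isCompact_torusBox d)
  intro p₀
  by_cases h0 : gradSq f p₀ = 0
  · obtain ⟨c, hc, hev⟩ := morse_lower hf hM h0
    obtain ⟨r, hr, hball⟩ := Metric.eventually_nhds_iff_ball.1 hev
    refine ⟨Metric.ball p₀ r, Metric.ball_mem_nhds _ hr, ?_⟩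
    have hIntg : IntegrableOn (fun x => gradSq f (p₀ + x) ^ (-(5/4) : ℝ))
        (Metric.ball (0 : Fin d → ℝ) r) := by
      refine integrableOn_ball_of_norm_le_rpow (α := 5/2) (C := c ^ (-(5/4) : ℝ)) ?_ ?_ ?_ ?_
      · rw [Module.finrank_fin_fun]; omega
      · rw [Module.finrank_fin_fun]
        have : (3:ℝ) ≤ d := by exact_mod_cast hd
        linarith
      · have hne : Nonempty (Fin d) := ⟨⟨0, by omega⟩⟩
        rw [ae_restrict_iff' measurableSet_ball]
        have hz : ∀ᵐ x : Fin d → ℝ, x ≠ 0 := by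
          rw [ae_iff]; simp
        filter_upwards [hz] with x hx hxr
        have h := hball (p₀ + x) (by simpa using hxr)
        rw [add_sub_cancel_left] at h
        have hxn : 0 < ‖x‖ := norm_pos_iff.2 hx
        rw [Real.norm_eq_abs, abs_of_nonneg (Real.rpow_nonneg (gradSq_nonneg _ _) _)]
        calc _ ≤ (c * ‖x‖ ^ 2) ^ (-(5/4) : ℝ) :=
              Real.rpow_le_rpow_of_nonpos (by positivity) h (by norm_num)
          _ = _ := by
            rw [Real.mul_rpow hc.le (by positivity), ← Real.rpow_natCast, ← Real.rpow_mul hxn.le]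
            norm_num
      · exact (hmeas.comp (measurable_const_add p₀)).aestronglyMeasurable
    have hmp := measurePreserving_add_left (volume : Measure (Fin d → ℝ)) p₀
    have hemb : MeasurableEmbedding (fun x : Fin d → ℝ => p₀ + x) :=
      measurableEmbedding_addLeft p₀
    rw [← hmp.integrableOn_comp_preimage hemb]
    have hpre : (fun x : Fin d → ℝ => p₀ + x) ⁻¹' Metric.ball p₀ r = Metric.ball 0 r := by
      ext x; simp
    rw [hpre]
    exact hIntg
  · have hc : ContinuousAt (fun p => gradSq f p ^ (-(5/4) : ℝ)) p₀ :=
      hN.continuousAt.rpow_const (Or.inl h0)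
    exact (volume.finiteAt_nhds p₀).integrableAtFilter_of_tendsto
      hmeas.stronglyMeasurable.stronglyMeasurableAtFilter hc

/-! ### The key oscillation estimate -/

lemma zero_mem_torusBox (d : ℕ) : (0 : Fin d → ℝ) ∈ torusBox d := by
  intro k _
  simp [Real.pi_pos.le]

lemma Adm.nonneg {d : ℕ} {u : (Fin d → ℝ) → ℂ} {M : ℝ} (h : Adm u M) : 0 ≤ M :=
  (norm_nonneg _).trans (h.bd 0 (zero_mem_torusBox d))

lemma inv_le_rpow {N : ℝ} (hN : 0 ≤ N) : N⁻¹ ≤ 1 + N ^ (-(5/4) : ℝ) := by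
  rcases hN.eq_or_lt with h | h
  · rw [← h, inv_zero]
    have := Real.rpow_nonneg (le_refl (0:ℝ)) (-(5/4) : ℝ)
    linarith
  · rcases le_total N 1 with h1 | h1
    · have := Real.rpow_le_rpow_of_exponent_ge h h1 (show (-(5/4) : ℝ) ≤ -1 by norm_num)
      rw [Real.rpow_neg_one] at this
      linarith
    · have h2 := inv_le_one_of_one_le₀ h1
      have := Real.rpow_nonneg hN (-(5/4) : ℝ)
      linarith

lemma gradSq_inv_integrable {d : ℕ} (hd : 3 ≤ d) {f : (Fin d → ℝ) → ℝ} (hf : ContDiff ℝ 2 f)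
    (hM : IsMorse f) : IntegrableOn (fun p => (gradSq f p)⁻¹) (torusBox d) := by
  have hN : Continuous (gradSq f) := (contDiff_gradSq (n := 1) hf).continuous
  have h1 : IntegrableOn (fun _ : Fin d → ℝ => (1:ℝ)) (torusBox d) :=
    continuous_const.continuousOn.integrableOn_compact (isCompact_torusBox d)
  refine Integrable.mono' (h1.add (gradSq_integrable hd hf hM))
    hN.measurable.inv.aestronglyMeasurable ?_
  refine Filter.Eventually.of_forall fun p => ?_
  rw [Real.norm_eq_abs, abs_of_nonneg (inv_nonneg.2 (gradSq_nonneg f p))]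
  exact inv_le_rpow (gradSq_nonneg f p)

lemma contInt {d : ℕ} {E : Type*} [NormedAddCommGroup E] {h : (Fin d → ℝ) → E}
    (hh : Continuous h) : IntegrableOn h (torusBox d) :=
  hh.continuousOn.integrableOn_compact (isCompact_torusBox d)

lemma bdd_mul_inv {d : ℕ} (hd : 3 ≤ d) {f : (Fin d → ℝ) → ℝ} (hf : ContDiff ℝ 2 f)
    (hM : IsMorse f) {h : (Fin d → ℝ) → ℝ} (hh : Continuous h) :
    IntegrableOn (fun p => h p * (gradSq f p)⁻¹) (torusBox d) := by
  obtain ⟨C, hC⟩ := (isCompact_torusBox d).exists_bound_of_continuousOn hh.continuousOn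
  refine Integrable.bdd_mul (c := C) (gradSq_inv_integrable hd hf hM)
    hh.aestronglyMeasurable ?_
  exact (ae_restrict_mem (measurableSet_torusBox d)).mono fun p hp => hC p hp

lemma ibp' {d : ℕ} (hd : 3 ≤ d) {f : (Fin d → ℝ) → ℝ} (hf : ContDiff ℝ 2 f) (hP : Per f)
    (hM : IsMorse f) : ∃ Cf, 0 ≤ Cf ∧ ∀ (u : (Fin d → ℝ) → ℂ) (M : ℝ), Adm u M →
      ∀ φ φ' : ℝ → ℂ, (∀ t, HasDerivAt φ (φ' t) t) → Continuous φ' →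
      ‖∫ p in torusBox d, u p * φ' (f p)‖ ≤
        Cf * M * ∫ p in torusBox d, ‖φ (f p)‖ * (gradSq f p)⁻¹ := by
  obtain ⟨Cf, hCf, H⟩ := ibp hf hP
  refine ⟨Cf, hCf, fun u M hu φ φ' hφ hφ' => ?_⟩
  have hN : Continuous (gradSq f) := (contDiff_gradSq (n := 1) hf).continuous
  have hφc : Continuous φ := continuous_iff_continuousAt.2 fun t => (hφ t).continuousAt
  have hfc := hf.continuous
  have huc := hu.smooth.continuous
  have hne := gradSq_ae_ne hd hf hM
  have hlim : Filter.Tendsto (fun n : ℕ => ∫ p in torusBox d,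
      (gradSq f p / (gradSq f p + 1 / ((n:ℝ) + 1))) • (u p * φ' (f p))) Filter.atTop
      (nhds (∫ p in torusBox d, u p * φ' (f p))) := by
    refine tendsto_integral_of_dominated_convergence (fun p => ‖u p * φ' (f p)‖) ?_ ?_ ?_ ?_
    · intro n
      refine Continuous.aestronglyMeasurable ?_
      refine Continuous.smul (hN.div (by fun_prop) fun p => ?_) (by fun_prop)
      have := gradSq_nonneg f p
      positivity
    · exact (contInt (by fun_prop)).norm
    · intro n
      refine Filter.Eventually.of_forall fun p => ?_
      rw [norm_smul]
      refine mul_le_of_le_one_left (norm_nonneg _) ?_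
      have h0 := gradSq_nonneg f p
      have h1 : (0:ℝ) < 1 / ((n:ℝ) + 1) := by positivity
      rw [Real.norm_eq_abs, abs_of_nonneg (by positivity), div_le_one (by positivity)]
      linarith
    · filter_upwards [ae_restrict_of_ae hne] with p hp
      have h1 : Filter.Tendsto (fun n : ℕ => gradSq f p / (gradSq f p + 1 / ((n:ℝ) + 1)))
          Filter.atTop (nhds (gradSq f p / (gradSq f p + 0))) :=
        Filter.Tendsto.div tendsto_const_nhds
          (tendsto_const_nhds.add tendsto_one_div_add_atTop_nhds_zero_nat) (by simpa using hp)
      have h2 := h1.smul_const (u p * φ' (f p))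
      simpa [div_self hp] using h2
  refine le_of_tendsto hlim.norm (Filter.Eventually.of_forall fun n => ?_)
  have h1 : (0:ℝ) < 1 / ((n:ℝ) + 1) := by positivity
  refine (H u M hu φ φ' hφ hφ' _ h1).trans ?_
  refine mul_le_mul_of_nonneg_left ?_ (mul_nonneg hCf hu.nonneg)
  refine integral_mono_ae ?_ (bdd_mul_inv hd hf hM (by fun_prop)) ?_
  · refine contInt (Continuous.mul (by fun_prop) (Continuous.inv₀ (by fun_prop) fun p => ?_))
    have := gradSq_nonneg f p
    positivity
  · filter_upwards [ae_restrict_of_ae hne] with p hp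
    have h0 := lt_of_le_of_ne (gradSq_nonneg f p) (Ne.symm hp)
    refine mul_le_mul_of_nonneg_left ?_ (norm_nonneg _)
    exact inv_anti₀ h0 (by linarith)

lemma adm_one (d : ℕ) : Adm (fun _ : Fin d → ℝ => (1:ℂ)) 1 where
  smooth := contDiff_const
  per := fun _ _ => rfl
  bd := by simp
  bd' := by simp

lemma stepA {d : ℕ} (hd : 3 ≤ d) {f : (Fin d → ℝ) → ℝ} (hf : ContDiff ℝ 2 f) (hP : Per f)
    (hM : IsMorse f) (Λ : ℝ) : ∃ C, 0 ≤ C ∧ ∀ l η : ℝ, |l| ≤ Λ → 0 < η → η ≤ Λ →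
      ∫ p in torusBox d, ((f p - l) ^ 2 + η) ^ (-(1/4) : ℝ) ≤ C := by
  obtain ⟨Cf, hCf, H⟩ := ibp' hd hf hP hM
  have hfc := hf.continuous
  obtain ⟨F, hF⟩ := (isCompact_torusBox d).exists_bound_of_continuousOn hfc.continuousOn
  have hF0 : 0 ≤ F := (norm_nonneg _).trans (hF 0 (zero_mem_torusBox d))
  set S : ℝ := (F + Λ) ^ 2 + Λ with hS
  have hI0 : 0 ≤ ∫ p in torusBox d, (gradSq f p)⁻¹ :=
    integral_nonneg fun p => inv_nonneg.2 (gradSq_nonneg f p)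
  refine ⟨2 * (Cf * |S ^ (1/4 : ℝ)| * ∫ p in torusBox d, (gradSq f p)⁻¹), by positivity,
    fun l η hl hη hηΛ => ?_⟩
  set s : ℝ → ℝ := fun t => (t - l) ^ 2 + η with hs
  have hspos : ∀ t, 0 < s t := fun t => by simp only [hs]; positivity
  have hscont : Continuous s := by simp only [hs]; fun_prop
  set φ : ℝ → ℝ := fun t => (t - l) * s t ^ (-(1/4) : ℝ) with hφ
  set φ' : ℝ → ℝ := fun t => s t ^ (-(1/4) : ℝ) +
    (t - l) * ((2 * (t - l)) * (-(1/4)) * s t ^ (-(1/4) - 1 : ℝ)) with hφ'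
  have hder : ∀ t, HasDerivAt φ (φ' t) t := by
    intro t
    have h1 : HasDerivAt (fun t => t - l) 1 t := (hasDerivAt_id t).sub_const l
    have h2 : HasDerivAt s (2 * (t - l)) t := by
      have := (h1.pow 2).add_const η
      simpa [hs] using this
    have h3 := h2.rpow_const (p := (-(1/4) : ℝ)) (Or.inl (hspos t).ne')
    have := h1.mul h3
    rw [one_mul] at this
    exact this
  have hφ'c : Continuous φ' := by
    have hr : ∀ a : ℝ, Continuous fun t => s t ^ a := fun a =>
      hscont.rpow_const fun t => Or.inl (hspos t).ne'
    simp only [hφ']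
    exact (hr _).add ((by fun_prop : Continuous fun t => t - l).mul
      ((by fun_prop : Continuous fun t => 2 * (t - l) * (-(1/4))).mul (hr _)))
  have hlow : ∀ t, s t ^ (-(1/4) : ℝ) ≤ 2 * φ' t := by
    intro t
    have h1 : s t ^ (-(1/4) - 1 : ℝ) = s t ^ (-(1/4) : ℝ) / s t := Real.rpow_sub_one (hspos t).ne' _
    have h2 : (t - l) ^ 2 / s t ≤ 1 := by
      rw [div_le_one (hspos t)]; simp only [hs]; linarith
    have h3 : φ' t = s t ^ (-(1/4) : ℝ) * (1 - (1/2) * ((t - l) ^ 2 / s t)) := by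
      simp only [hφ']; rw [h1]; ring
    rw [h3]
    have h4 := Real.rpow_nonneg (hspos t).le (-(1/4) : ℝ)
    nlinarith
  have key := H _ 1 (adm_one d) (fun t => (φ t : ℂ)) (fun t => (φ' t : ℂ))
    (fun t => (hder t).ofReal_comp) (Complex.continuous_ofReal.comp hφ'c)
  have e1 : ∫ p in torusBox d, (1:ℂ) * (φ' (f p) : ℂ) = ((∫ p in torusBox d, φ' (f p) : ℝ) : ℂ) := by
    simp only [one_mul]
    exact integral_ofReal
  rw [e1, Complex.norm_real, Real.norm_eq_abs, mul_one] at key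
  have e2 : ∫ p in torusBox d, s (f p) ^ (-(1/4) : ℝ) ≤ 2 * ∫ p in torusBox d, φ' (f p) := by
    rw [← integral_const_mul]
    refine integral_mono ?_ ?_ fun p => hlow (f p)
    · exact contInt ((hscont.comp hfc).rpow_const fun t => Or.inl (hspos _).ne')
    · exact (contInt (hφ'c.comp hfc)).const_mul 2
  have e3 : ∫ p in torusBox d, ‖(φ (f p) : ℂ)‖ * (gradSq f p)⁻¹ ≤
      |S ^ (1/4 : ℝ)| * ∫ p in torusBox d, (gradSq f p)⁻¹ := by
    rw [← integral_const_mul]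
    have hφc : Continuous φ := continuous_iff_continuousAt.2 fun t => (hder t).continuousAt
    refine setIntegral_mono_on (bdd_mul_inv hd hf hM (by fun_prop))
      ((gradSq_inv_integrable hd hf hM).const_mul _) (measurableSet_torusBox d) fun p hp => ?_
    refine mul_le_mul_of_nonneg_right ?_ (inv_nonneg.2 (gradSq_nonneg f p))
    rw [Complex.norm_real, Real.norm_eq_abs]
    simp only [hφ]
    have h0 := hspos (f p)
    rw [abs_mul, abs_of_nonneg (Real.rpow_nonneg h0.le _)]
    have h1 : |f p - l| ≤ s (f p) ^ (1/2 : ℝ) := by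
      rw [← Real.sqrt_eq_rpow]
      apply Real.abs_le_sqrt
      simp only [hs]; linarith
    have h2 : s (f p) ≤ S := by
      have : |f p - l| ≤ F + Λ := (abs_sub _ _).trans (add_le_add (hF p hp) hl)
      have := pow_le_pow_left₀ (abs_nonneg _) this 2
      rw [sq_abs] at this
      simp only [hs, hS]; linarith
    calc _ ≤ s (f p) ^ (1/2 : ℝ) * s (f p) ^ (-(1/4) : ℝ) :=
          mul_le_mul_of_nonneg_right h1 (Real.rpow_nonneg h0.le _)
      _ = s (f p) ^ (1/4 : ℝ) := by rw [← Real.rpow_add h0]; norm_num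
      _ ≤ S ^ (1/4 : ℝ) := Real.rpow_le_rpow h0.le h2 (by norm_num)
      _ ≤ _ := le_abs_self _
  calc _ ≤ 2 * ∫ p in torusBox d, φ' (f p) := e2
    _ ≤ 2 * (Cf * ∫ p in torusBox d, ‖(φ (f p) : ℂ)‖ * (gradSq f p)⁻¹) :=
        mul_le_mul_of_nonneg_left ((le_abs_self _).trans key) (by norm_num)
    _ ≤ _ := by
      rw [mul_assoc]
      gcongr

lemma young_aux {L N : ℝ} (hL : 0 ≤ L) (hN : 0 ≤ N) : L * N⁻¹ ≤ N ^ (-(5/4) : ℝ) + L ^ 5 := by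
  rcases hN.eq_or_lt with h | h
  · rw [← h, inv_zero, mul_zero]
    have := Real.rpow_nonneg (le_refl (0:ℝ)) (-(5/4) : ℝ)
    positivity
  · have h5 := Real.rpow_nonneg hN (-(5/4) : ℝ)
    have h4 := Real.rpow_nonneg hN (-(1/4) : ℝ)
    rcases le_total L (N ^ (-(1/4) : ℝ)) with h1 | h1
    · have : N ^ (-(5/4) : ℝ) = N ^ (-(1/4) : ℝ) * N⁻¹ := by
        rw [← Real.rpow_neg_one, ← Real.rpow_add h]; norm_num
      have h2 := mul_le_mul_of_nonneg_right h1 (inv_nonneg.2 hN)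
      have : 0 ≤ L ^ 5 := by positivity
      linarith
    · have h2 : N⁻¹ ≤ L ^ 4 := by
        have := pow_le_pow_left₀ h4 h1 4
        rwa [← Real.rpow_natCast, ← Real.rpow_mul hN, show (-(1/4) : ℝ) * (4:ℕ) = -1 by norm_num,
          Real.rpow_neg_one] at this
      have := mul_le_mul_of_nonneg_left h2 hL
      have h6 : L ^ 5 = L * L ^ 4 := by ring
      linarith

lemma log_aux {ρ ρ0 : ℝ} (hρ : 0 < ρ) (h : ρ ≤ ρ0) (h0 : 1 ≤ ρ0) :
    (|Real.log ρ| + π) ^ 5 ≤ (10 + (ρ0 + π) * ρ0) ^ 5 * ρ ^ (-(1/2) : ℝ) := by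
  have hr : 0 < ρ ^ (-(1/10) : ℝ) := Real.rpow_pos_of_pos hρ _
  have h1 : |Real.log ρ| ≤ 10 * ρ ^ (-(1/10) : ℝ) + ρ0 := by
    rw [abs_le]
    constructor
    · have := Real.log_le_rpow_div (inv_nonneg.2 hρ.le) (show (0:ℝ) < 1/10 by norm_num)
      rw [Real.log_inv, Real.inv_rpow hρ.le, ← Real.rpow_neg hρ.le] at this
      have e : ρ ^ (-(1/10) : ℝ) / (1/10) = 10 * ρ ^ (-(1/10) : ℝ) := by ring
      linarith
    · have := Real.log_le_sub_one_of_pos hρ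
      linarith
  have h2 : 1 ≤ ρ0 * ρ ^ (-(1/10) : ℝ) := by
    have e1 : ρ0 ^ (-(1/10) : ℝ) ≤ ρ ^ (-(1/10) : ℝ) :=
      Real.rpow_le_rpow_of_nonpos hρ h (by norm_num)
    have e2 : ρ0 ^ (-1 : ℝ) ≤ ρ0 ^ (-(1/10) : ℝ) :=
      Real.rpow_le_rpow_of_exponent_le h0 (by norm_num)
    rw [Real.rpow_neg_one] at e2
    have := mul_le_mul_of_nonneg_left (e2.trans e1) (by linarith : 0 ≤ ρ0)
    rwa [mul_inv_cancel₀ (by linarith)] at this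
  have h3 : |Real.log ρ| + π ≤ (10 + (ρ0 + π) * ρ0) * ρ ^ (-(1/10) : ℝ) := by
    have := mul_le_mul_of_nonneg_left h2 (by linarith [Real.pi_pos] : 0 ≤ ρ0 + π)
    nlinarith
  calc _ ≤ ((10 + (ρ0 + π) * ρ0) * ρ ^ (-(1/10) : ℝ)) ^ 5 :=
        pow_le_pow_left₀ (by have := Real.pi_pos; positivity) h3 5
    _ = _ := by
      rw [mul_pow, ← Real.rpow_natCast (ρ ^ (-(1/10) : ℝ)), ← Real.rpow_mul hρ.le]
      norm_num

lemma key_estimate {d : ℕ} (hd : 3 ≤ d) {f : (Fin d → ℝ) → ℝ} (hf : ContDiff ℝ 2 f) (hP : Per f)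
    (hM : IsMorse f) : ∃ K, 0 ≤ K ∧ ∀ (u : (Fin d → ℝ) → ℂ) (M : ℝ), Adm u M →
      ∀ z : ℂ, z.im ≠ 0 → ‖∫ p in torusBox d, u p / (z - (f p : ℂ))‖ ≤ K * M := by
  obtain ⟨Cf, hCf, H⟩ := ibp' hd hf hP hM
  have hfc := hf.continuous
  obtain ⟨F, hF⟩ := (isCompact_torusBox d).exists_bound_of_continuousOn hfc.continuousOn
  have hF0 : 0 ≤ F := (norm_nonneg _).trans (hF 0 (zero_mem_torusBox d))
  obtain ⟨CA, hCA, HA⟩ := stepA hd hf hP hM ((F + 1) ^ 2)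
  set I1 : ℝ := ∫ p in torusBox d, gradSq f p ^ (-(5/4) : ℝ) with hI1
  have hI10 : 0 ≤ I1 := integral_nonneg fun p => Real.rpow_nonneg (gradSq_nonneg f p) _
  set C1 : ℝ := (10 + (2 * F + 1 + π) * (2 * F + 1)) ^ 5 with hC1
  have hC10 : 0 ≤ C1 := by have := Real.pi_pos; positivity
  set vol : ℝ := (volume.real (torusBox d)) with hvol
  have hvol0 : 0 ≤ vol := measureReal_nonneg
  refine ⟨Cf * (I1 + C1 * CA) + vol, by positivity, fun u M hu z hz => ?_⟩
  have hM0 := hu.nonneg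
  rcases le_total (F + 1) ‖z‖ with hzb | hzs
  · have : ‖∫ p in torusBox d, u p / (z - (f p : ℂ))‖ ≤ M * vol := by
      refine norm_setIntegral_le_of_norm_le_const ?_ ?_
      · exact (isCompact_torusBox d).measure_lt_top
      · intro p hp
        have h1 : 1 ≤ ‖z - (f p : ℂ)‖ := by
          have h2 := norm_sub_norm_le z (f p : ℂ)
          rw [Complex.norm_real] at h2
          have := hF p hp
          linarith
        rw [norm_div]
        exact (div_le_self (norm_nonneg _) h1).trans (hu.bd p hp)
    have h2 : 0 ≤ Cf * (I1 + C1 * CA) := by positivity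
    nlinarith
  · have hslit : ∀ t : ℝ, z - (t : ℂ) ∈ Complex.slitPlane := fun t => by
      right; simpa using hz
    have hder : ∀ t : ℝ, HasDerivAt (fun t : ℝ => -Complex.log (z - (t : ℂ)))
        (1 / (z - (t : ℂ))) t := by
      intro t
      have h1 : HasDerivAt (fun t : ℝ => z - (t : ℂ)) (-1) t := by
        simpa using (Complex.ofRealCLM.hasDerivAt (x := t)).const_sub z
      have := (h1.clog_real (hslit t)).neg
      rw [neg_div, neg_neg] at this
      exact this
    have hne : ∀ t : ℝ, z - (t : ℂ) ≠ 0 := sub_ne_zero_of_im hz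
    have key := H u M hu _ (fun t => 1 / (z - (t : ℂ))) hder
      (Continuous.div (by fun_prop) (by fun_prop) hne)
    have e0 : ∀ p, u p * (1 / (z - (f p : ℂ))) = u p / (z - (f p : ℂ)) := fun p => by ring
    simp only [e0] at key
    have hφc : Continuous fun t : ℝ => -Complex.log (z - (t : ℂ)) :=
      continuous_iff_continuousAt.2 fun t => (hder t).continuousAt
    have hsq : ∀ t : ℝ, ‖z - (t : ℂ)‖ ^ (-(1/2) : ℝ) =
        ((t - z.re) ^ 2 + z.im ^ 2) ^ (-(1/4) : ℝ) := by
      intro t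
      have : (t - z.re) ^ 2 + z.im ^ 2 = ‖z - (t : ℂ)‖ ^ 2 := by
        rw [← Complex.normSq_eq_norm_sq, Complex.normSq_apply]
        simp
        ring
      rw [this, ← Real.rpow_natCast, ← Real.rpow_mul (norm_nonneg _)]
      norm_num
    have him : 0 < z.im ^ 2 := by positivity
    have hcs : Continuous fun p => ((f p - z.re) ^ 2 + z.im ^ 2) ^ (-(1/4) : ℝ) := by
      refine Continuous.rpow_const (by fun_prop) fun p => Or.inl ?_
      positivity
    have e1 : ∫ p in torusBox d, ‖-Complex.log (z - (f p : ℂ))‖ * (gradSq f p)⁻¹ ≤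
        I1 + C1 * CA := by
      calc _ ≤ ∫ p in torusBox d, (gradSq f p ^ (-(5/4) : ℝ) +
            C1 * ((f p - z.re) ^ 2 + z.im ^ 2) ^ (-(1/4) : ℝ)) := by
            refine setIntegral_mono_on (bdd_mul_inv hd hf hM (hφc.comp hfc).norm)
              ((gradSq_integrable hd hf hM).add ((contInt hcs).const_mul _))
              (measurableSet_torusBox d) fun p hp => ?_
            have hρ : 0 < ‖z - (f p : ℂ)‖ := norm_pos_iff.2 (hne _)
            have hρ1 : ‖z - (f p : ℂ)‖ ≤ 2 * F + 1 := by
              have h2 := norm_sub_le z (f p : ℂ)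
              rw [Complex.norm_real] at h2
              have := hF p hp
              linarith
            have hL : ‖-Complex.log (z - (f p : ℂ))‖ ≤ |Real.log ‖z - (f p : ℂ)‖| + π := by
              rw [norm_neg]
              refine (Complex.norm_le_abs_re_add_abs_im _).trans ?_
              rw [Complex.log_re, Complex.log_im]
              exact add_le_add le_rfl (Complex.abs_arg_le_pi _)
            have hlog := log_aux hρ hρ1 (by linarith)
            rw [hsq] at hlog
            have hy := young_aux (L := |Real.log ‖z - (f p : ℂ)‖| + π)
              (by have := Real.pi_pos; positivity) (gradSq_nonneg f p)
            have := mul_le_mul_of_nonneg_right hL (inv_nonneg.2 (gradSq_nonneg f p))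
            linarith
        _ = I1 + C1 * ∫ p in torusBox d, ((f p - z.re) ^ 2 + z.im ^ 2) ^ (-(1/4) : ℝ) := by
            rw [integral_add (gradSq_integrable hd hf hM) ((contInt hcs).const_mul _),
              integral_const_mul]
        _ ≤ _ := by
            gcongr
            have hle : F + 1 ≤ (F + 1) ^ 2 := by nlinarith
            refine HA _ _ (((Complex.abs_re_le_norm z).trans hzs).trans hle) him ?_
            have := pow_le_pow_left₀ (abs_nonneg _) ((Complex.abs_im_le_norm z).trans hzs) 2
            rwa [sq_abs] at this
    calc _ ≤ Cf * M * (I1 + C1 * CA) := key.trans (mul_le_mul_of_nonneg_left e1 (by positivity))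
      _ ≤ _ := by nlinarith [mul_nonneg hvol0 hM0]

/-! ### Admissible amplitudes -/

lemma Adm.mono {d : ℕ} {u : (Fin d → ℝ) → ℂ} {M M' : ℝ} (h : Adm u M) (hM : M ≤ M') : Adm u M' where
  smooth := h.smooth
  per := h.per
  bd := fun p hp => (h.bd p hp).trans hM
  bd' := fun p hp k => (h.bd' p hp k).trans hM

lemma Adm.add {d : ℕ} {u v : (Fin d → ℝ) → ℂ} {M M' : ℝ} (h : Adm u M) (h' : Adm v M') :
    Adm (fun p => u p + v p) (M + M') where
  smooth := h.smooth.add h'.smooth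
  per := fun p m => by beta_reduce; rw [h.per p m, h'.per p m]
  bd := fun p hp => (norm_add_le _ _).trans (add_le_add (h.bd p hp) (h'.bd p hp))
  bd' := fun p hp k => by
    rw [fderiv_fun_add (h.smooth.differentiable (by norm_num) p)
      (h'.smooth.differentiable (by norm_num) p)]
    exact (norm_add_le _ _).trans (add_le_add (h.bd' p hp k) (h'.bd' p hp k))

lemma Adm.mul {d : ℕ} {u v : (Fin d → ℝ) → ℂ} {M M' : ℝ} (h : Adm u M) (h' : Adm v M') :
    Adm (fun p => u p * v p) (2 * M * M') where
  smooth := h.smooth.mul h'.smooth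
  per := fun p m => by beta_reduce; rw [h.per p m, h'.per p m]
  bd := fun p hp => by
    rw [norm_mul]
    have h1 := mul_le_mul (h.bd p hp) (h'.bd p hp) (norm_nonneg _) h.nonneg
    have := mul_nonneg h.nonneg h'.nonneg
    linarith
  bd' := fun p hp k => by
    rw [fderiv_fun_mul (h.smooth.differentiable (by norm_num) p)
      (h'.smooth.differentiable (by norm_num) p)]
    have h1 := mul_le_mul (h.bd p hp) (h'.bd' p hp k) (norm_nonneg _) h.nonneg
    have h2 := mul_le_mul (h'.bd p hp) (h.bd' p hp k) (norm_nonneg _) h'.nonneg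
    rw [← norm_mul] at h1 h2
    have h3 : ‖u p * fderiv ℝ v p (Pi.single k 1) + v p * fderiv ℝ u p (Pi.single k 1)‖ ≤
        2 * M * M' := by
      refine (norm_add_le _ _).trans ?_
      linarith
    exact h3

lemma Adm.const_mul {d : ℕ} {u : (Fin d → ℝ) → ℂ} {M : ℝ} (h : Adm u M) (c : ℂ) :
    Adm (fun p => c * u p) (‖c‖ * M) where
  smooth := contDiff_const.mul h.smooth
  per := fun p m => by beta_reduce; rw [h.per p m]
  bd := fun p hp => by
    rw [norm_mul]
    exact mul_le_mul_of_nonneg_left (h.bd p hp) (norm_nonneg _)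
  bd' := fun p hp k => by
    rw [fderiv_const_mul (h.smooth.differentiable (by norm_num) p)]
    simp only [smul_apply, smul_eq_mul, norm_mul]
    exact mul_le_mul_of_nonneg_left (h.bd' p hp k) (norm_nonneg _)

lemma Adm.sum {d : ℕ} {ι : Type*} (s : Finset ι) {u : ι → (Fin d → ℝ) → ℂ} {M : ι → ℝ}
    (h : ∀ i, Adm (u i) (M i)) : Adm (fun p => ∑ i ∈ s, u i p) (∑ i ∈ s, M i) := by
  classical
  induction s using Finset.induction_on with
  | empty =>
    simp only [Finset.sum_empty]
    exact ⟨contDiff_const, fun _ _ => rfl, by simp, by simp⟩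
  | insert a s ha ih =>
    simp only [Finset.sum_insert ha]
    exact (h a).add ih

lemma Adm.conj {d : ℕ} {u : (Fin d → ℝ) → ℂ} {M : ℝ} (h : Adm u M) :
    Adm (fun p => (starRingEnd ℂ) (u p)) M where
  smooth := Complex.conjCLE.contDiff.comp h.smooth
  per := fun p m => by beta_reduce; rw [h.per p m]
  bd := fun p hp => by rw [RCLike.norm_conj]; exact h.bd p hp
  bd' := fun p hp k => by
    have h1 := Complex.conjCLE.hasFDerivAt.comp p
      (h.smooth.differentiable (by norm_num) p).hasFDerivAt
    have h2 : fderiv ℝ (fun p => (starRingEnd ℂ) (u p)) p = _ := h1.fderiv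
    rw [h2]
    have h3 : ‖(starRingEnd ℂ) (fderiv ℝ u p (Pi.single k 1))‖ ≤ M := by
      rw [RCLike.norm_conj]; exact h.bd' p hp k
    exact h3

lemma Adm.exists {d : ℕ} {u : (Fin d → ℝ) → ℂ} (hu : ContDiff ℝ 1 u) (hp : Per u) :
    ∃ M, Adm u M := by
  have hc : Continuous fun p => ‖u p‖ + ∑ k, ‖fderiv ℝ u p (Pi.single k 1)‖ := by
    refine hu.continuous.norm.add (continuous_finsetSum _ fun k _ => ?_)
    exact ((hu.continuous_fderiv (by norm_num)).clm_apply continuous_const).norm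
  obtain ⟨M, hM⟩ := (isCompact_torusBox d).exists_bound_of_continuousOn hc.continuousOn
  have hM' : ∀ p ∈ torusBox d, ‖u p‖ + ∑ k, ‖fderiv ℝ u p (Pi.single k 1)‖ ≤ M :=
    fun p hp => (le_abs_self _).trans (hM p hp)
  refine ⟨M, hu, hp, fun p hp => ?_, fun p hp k => ?_⟩
  · have : 0 ≤ ∑ k, ‖fderiv ℝ u p (Pi.single k 1)‖ := Finset.sum_nonneg fun _ _ => norm_nonneg _
    have := hM' p hp
    linarith
  · have h1 := Finset.single_le_sum (f := fun k => ‖fderiv ℝ u p (Pi.single k 1)‖)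
      (fun _ _ => norm_nonneg _) (Finset.mem_univ k)
    have h2 := hM' p hp
    have h3 := norm_nonneg (u p)
    beta_reduce at h1
    linarith

lemma abs_coord_le {d : ℕ} (y : Γd d) (k : Fin d) : |(y k : ℝ)| ≤ lnorm y := by
  unfold lnorm
  apply Real.abs_le_sqrt
  exact Finset.single_le_sum (f := fun i => (y i : ℝ) ^ 2) (fun _ _ => sq_nonneg _)
    (Finset.mem_univ k)

lemma lnorm_nonneg {d : ℕ} (y : Γd d) : 0 ≤ lnorm y := Real.sqrt_nonneg _

lemma ex_norm {d : ℕ} (y : Γd d) (p : Fin d → ℝ) : ‖ex y p‖ = 1 := by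
  unfold ex
  rw [Complex.norm_exp]
  simp

lemma adm_ex {d : ℕ} (y : Γd d) : Adm (ex y) (1 + lnorm y) := by
  set l : (Fin d → ℝ) →L[ℝ] ℝ := ∑ i, (y i : ℝ) • ContinuousLinearMap.proj i with hl
  have hlp : ∀ p, dotZ p y = l p := by
    intro p
    simp only [hl, dotZ, sum_apply, smul_apply,
      ContinuousLinearMap.proj_apply, smul_eq_mul]
    exact Finset.sum_congr rfl fun i _ => mul_comm _ _
  have hex : ex y = fun p => Complex.exp (-(Complex.I * (Complex.ofRealCLM.comp l) p)) := by
    funext p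
    simp [ex, hlp]
  have hd : ∀ p, HasFDerivAt (ex y) _ p := fun p => by
    rw [hex]
    exact (((Complex.ofRealCLM.comp l).hasFDerivAt (x := p)).const_mul Complex.I).neg.cexp
  have hn := lnorm_nonneg y
  refine ⟨?_, ?_, ?_, ?_⟩
  · rw [hex]
    exact (contDiff_const.mul (Complex.ofRealCLM.comp l).contDiff).neg.cexp
  · intro p m
    have h1 : dotZ (p + fun i => 2 * π * (m i : ℝ)) y =
        dotZ p y + 2 * π * ((∑ i, m i * y i : ℤ) : ℝ) := by
      simp only [dotZ, Pi.add_apply, add_mul, Finset.sum_add_distrib]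
      push_cast
      rw [Finset.mul_sum]
      congr 1
      exact Finset.sum_congr rfl fun i _ => by ring
    unfold ex
    rw [h1, Complex.exp_eq_exp_iff_exists_int]
    refine ⟨-(∑ i, m i * y i : ℤ), ?_⟩
    push_cast
    ring
  · intro p _
    rw [ex_norm]; linarith
  · intro p _ k
    rw [(hd p).fderiv]
    have hk : l (Pi.single k 1) = y k := by
      rw [← hlp]
      simp [dotZ, Pi.single_apply]
    have he : ‖Complex.exp (-(Complex.I * (Complex.ofRealCLM.comp l) p))‖ = 1 := by
      have := ex_norm y p
      rwa [hex] at this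
    have h1 : ‖Complex.exp (-(Complex.I * (Complex.ofRealCLM.comp l) p)) *
        (-(Complex.I * ((l (Pi.single k 1) : ℝ) : ℂ)))‖ ≤ 1 + lnorm y := by
      rw [norm_mul, he, norm_neg, norm_mul, Complex.norm_I, hk, Complex.norm_real]
      have := abs_coord_le y k
      rw [Real.norm_eq_abs]
      linarith
    exact h1

lemma adm_ghat {d : ℕ} {e : (Fin d → ℝ) → ℝ} (he : ContDiff ℝ 3 e) (hP : Per e) :
    ∃ C, 1 ≤ C ∧ ∀ x, Adm (ghat e x) (C * (1 + lnorm x) ^ 2) := by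
  have hpd : ∀ k, ContDiff ℝ 2 (pd e k) := fun k => contDiff_pd (n := 2) he k
  have hgs : ContDiff ℝ 2 (gradSq e) := contDiff_gradSq (n := 2) he
  have h0 : ∃ M, Adm (fun p => ((gradSq e p : ℝ) : ℂ)) M :=
    Adm.exists (Complex.ofRealCLM.contDiff.comp (hgs.of_le (by norm_num)))
      (fun p m => by rw [hP.gradSq p m])
  have hk : ∀ k, ∃ M, Adm (fun p => ((pd e k p : ℝ) : ℂ)) M := fun k =>
    Adm.exists (Complex.ofRealCLM.contDiff.comp ((hpd k).of_le (by norm_num)))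
      (fun p m => by rw [hP.pd k p m])
  obtain ⟨M0, hM0⟩ := h0
  choose M hM using hk
  have hM00 := hM0.nonneg
  have hMk : ∀ k, 0 ≤ M k := fun k => (hM k).nonneg
  refine ⟨2 * (M0 + ∑ k, M k) + 1, ?_, fun x => ?_⟩
  · have := Finset.sum_nonneg fun k (_ : k ∈ Finset.univ) => hMk k
    linarith
  · have hn := lnorm_nonneg x
    have hS := Finset.sum_nonneg fun k (_ : k ∈ Finset.univ) => hMk k
    have h1 := ((hM0.const_mul (Complex.I / 2)).add
      (Adm.sum Finset.univ fun k => (hM k).const_mul ((x k : ℝ) : ℂ))).mul (adm_ex x)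
    have hfun : ghat e x = fun p => (Complex.I / 2 * ((gradSq e p : ℝ) : ℂ) +
        ∑ k, ((x k : ℝ) : ℂ) * ((pd e k p : ℝ) : ℂ)) * ex x p := by
      funext p
      simp only [ghat, ex]
      push_cast
      congr 2
      exact Finset.sum_congr rfl fun k _ => mul_comm _ _
    rw [hfun]
    refine h1.mono ?_
    have h2 : ∑ k, ‖((x k : ℝ) : ℂ)‖ * M k ≤ lnorm x * ∑ k, M k := by
      rw [Finset.mul_sum]
      refine Finset.sum_le_sum fun k _ => mul_le_mul_of_nonneg_right ?_ (hMk k)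
      rw [Complex.norm_real]
      exact abs_coord_le x k
    have h3 : ‖Complex.I / 2‖ * M0 ≤ M0 := by
      have : ‖Complex.I / 2‖ = 1 / 2 := by simp
      rw [this]; linarith
    have h4 : ‖Complex.I / 2‖ * M0 + ∑ k, ‖((x k : ℝ) : ℂ)‖ * M k ≤
        (M0 + ∑ k, M k) * (1 + lnorm x) := by nlinarith
    calc _ ≤ 2 * ((M0 + ∑ k, M k) * (1 + lnorm x)) * (1 + lnorm x) := by gcongr
      _ ≤ _ := by nlinarith [sq_nonneg (1 + lnorm x)]

/-- Matrix elements of the free resolvent between admissible vectors. -/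
lemma free_bound {d : ℕ} (hd : 3 ≤ d) {f : (Fin d → ℝ) → ℝ} (hf : ContDiff ℝ 2 f) (hP : Per f)
    (hM : IsMorse f) : ∃ K, 0 ≤ K ∧ ∀ (G : L2 d →L[ℂ] L2 d), IsMultiplier f G →
      ∀ z : ℂ, z.im ≠ 0 → ∀ (b : (Fin d → ℝ) → ℂ) (Mb : ℝ), Adm b Mb → ∀ v : L2 d,
      (∀ m, v m = coeff b m) → ∃ r, z • r - G r = v ∧
      ∀ (a : (Fin d → ℝ) → ℂ) (Ma : ℝ), Adm a Ma → ∀ w : L2 d, (∀ m, w m = coeff a m) →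
        ‖⟪w, r⟫‖ ≤ K * Ma * Mb := by
  obtain ⟨K, hK, H⟩ := key_estimate hd hf hP hM
  refine ⟨vcst d * (K * 2), by have := vcst_pos d; positivity, ?_⟩
  intro G hG z hz b Mb hb v hv
  have hfc := hf.continuous
  obtain ⟨r, hr, hrG⟩ := free_resolvent hfc hG hb.smooth.continuous hv hz
  refine ⟨r, hrG, fun a Ma ha w hw => ?_⟩
  have hbc := hb.smooth.continuous
  have hcont : Continuous fun p => b p / (z - (f p : ℂ)) :=
    hbc.div (by fun_prop) fun p => sub_ne_zero_of_im hz _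
  rw [parseval' ha.smooth.continuous hcont hw hr, norm_mul, Complex.norm_real, Real.norm_eq_abs,
    abs_of_pos (vcst_pos d)]
  have h1 := H _ _ (ha.conj.mul hb) z hz
  have h2 : ∀ p, (starRingEnd ℂ) (a p) * (b p / (z - (f p : ℂ))) =
      (starRingEnd ℂ) (a p) * b p / (z - (f p : ℂ)) := fun p => by ring
  simp only [h2]
  calc _ ≤ vcst d * (K * (2 * Ma * Mb)) := mul_le_mul_of_nonneg_left h1 (vcst_pos d).le
    _ = _ := by ring

lemma norm_bound (d : ℕ) : ∃ D : ℝ, 0 ≤ D ∧ ∀ (a : (Fin d → ℝ) → ℂ) (Ma : ℝ), Adm a Ma →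
    ∀ w : L2 d, (∀ m, w m = coeff a m) → ‖w‖ ≤ D * Ma := by
  set D0 : ℝ := vcst d * volume.real (torusBox d) with hD0
  have hD00 : 0 ≤ D0 := mul_nonneg (vcst_pos d).le measureReal_nonneg
  refine ⟨Real.sqrt D0, Real.sqrt_nonneg _, fun a Ma ha w hw => ?_⟩
  have h1 := parseval' ha.smooth.continuous ha.smooth.continuous hw hw
  have h2 : ‖w‖ ^ 2 = ‖⟪w, w⟫‖ := by
    rw [inner_self_eq_norm_sq_to_K]; simp
  have h3 : ‖∫ p in torusBox d, (starRingEnd ℂ) (a p) * a p‖ ≤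
      Ma ^ 2 * volume.real (torusBox d) := by
    refine norm_setIntegral_le_of_norm_le_const (isCompact_torusBox d).measure_lt_top ?_
    intro p hp
    rw [norm_mul, RCLike.norm_conj, ← sq]
    exact pow_le_pow_left₀ (norm_nonneg _) (ha.bd p hp) 2
  have h4 : ‖w‖ ^ 2 ≤ (Real.sqrt D0 * Ma) ^ 2 := by
    rw [h2, h1, norm_mul, Complex.norm_real, Real.norm_eq_abs, abs_of_pos (vcst_pos d), mul_pow,
      Real.sq_sqrt hD00, hD0]
    calc _ ≤ vcst d * (Ma ^ 2 * volume.real (torusBox d)) :=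
          mul_le_mul_of_nonneg_left h3 (vcst_pos d).le
      _ = _ := by ring
  exact le_of_sq_le_sq h4 (mul_nonneg (Real.sqrt_nonneg _) ha.nonneg)

lemma phi_bound {d : ℕ} {V : Γd d → ℝ} {c : ℝ} (hc : 0 < c) (h : Phi 2 3 V < ENNReal.ofReal c) :
    (Summable fun w => |V w| * ((1 + lnorm w) ^ 2) ^ 2) ∧
      ∑' w, |V w| * ((1 + lnorm w) ^ 2) ^ 2 ≤ c := by
  have h0 : ∀ w, 0 ≤ |V w| * ((1 + lnorm w) ^ 2) ^ 2 := fun w => by positivity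
  have hle : ∑' w, ENNReal.ofReal (|V w| * ((1 + lnorm w) ^ 2) ^ 2) ≤ Phi 2 3 V := by
    unfold Phi
    set a : Γd d → ℝ≥0∞ :=
      fun x => ENNReal.ofReal (|V x| ^ ((1 : ℝ) / (2:ℕ)) * (1 + lnorm x) ^ 3) with ha
    have h1 : ∀ w, ENNReal.ofReal (|V w| * ((1 + lnorm w) ^ 2) ^ 2) ≤ a w * ∑' x, a x := by
      intro w
      refine le_trans ?_ (mul_le_mul_right (ENNReal.le_tsum w) (a w))
      have hn := lnorm_nonneg w
      simp only [ha]
      rw [← ENNReal.ofReal_mul (by positivity)]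
      apply ENNReal.ofReal_le_ofReal
      have h2 : |V w| ^ ((1 : ℝ) / (2:ℕ)) * |V w| ^ ((1 : ℝ) / (2:ℕ)) = |V w| := by
        rw [show ((1 : ℝ) / (2:ℕ)) = 1 / 2 by norm_num, ← Real.sqrt_eq_rpow]
        exact Real.mul_self_sqrt (abs_nonneg _)
      calc |V w| * ((1 + lnorm w) ^ 2) ^ 2 = |V w| * (1 + lnorm w) ^ 4 := by ring
        _ ≤ |V w| * (1 + lnorm w) ^ 6 :=
            mul_le_mul_of_nonneg_left (pow_le_pow_right₀ (by linarith) (by norm_num)) (abs_nonneg _)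
        _ = (|V w| ^ ((1 : ℝ) / (2:ℕ)) * |V w| ^ ((1 : ℝ) / (2:ℕ))) * (1 + lnorm w) ^ 6 := by
            rw [h2]
        _ = _ := by ring
    calc _ ≤ ∑' w, a w * ∑' x, a x := ENNReal.tsum_le_tsum h1
      _ = _ := by rw [ENNReal.tsum_mul_right, sq]
  have hlt := hle.trans_lt h
  have hsum : Summable fun w => |V w| * ((1 + lnorm w) ^ 2) ^ 2 := by
    have := ENNReal.summable_toReal (hlt.trans ENNReal.ofReal_lt_top).ne
    refine this.congr fun w => ?_
    exact ENNReal.toReal_ofReal (h0 w)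
  refine ⟨hsum, ?_⟩
  rw [← ENNReal.ofReal_tsum_of_nonneg h0 hsum] at hlt
  exact ((ENNReal.ofReal_lt_ofReal_iff hc).1 hlt).le

/-- Limiting absorption principle for the commutator
`B = h(|∇𝔢|²) + C_V`. -/
theorem statement12 (d : ℕ) (hd : 3 ≤ d)
    (e : (Fin d → ℝ) → ℝ) (he : IsDispersion e) (heC3 : ContDiff ℝ 3 e) (heM : CondM e) :
    ∃ c : ℝ, 0 < c ∧
      ∀ (V : Γd d → ℝ) (g : Γd d → L2 d) (G Cv : L2 d →L[ℂ] L2 d),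
        IsGVec e g → IsMultiplier (gradSq e) G → IsCommOp V g Cv →
        Phi 2 3 V < ENNReal.ofReal c →
        ∃ c' : ℝ, ∀ z : ℂ, z.im ≠ 0 → ∀ R : L2 d →L[ℂ] L2 d,
          IsResolventAt (G + Cv) z R →
          ∀ x y : Γd d,
            ‖(⟪delta x, R (delta y)⟫ : ℂ)‖ ≤ c' * (1 + lnorm x) ^ 2 * (1 + lnorm y) ^ 2 := by
  have hP : Per e := he.1
  have hgs : ContDiff ℝ 2 (gradSq e) := contDiff_gradSq (n := 2) heC3
  obtain ⟨K0, hK0, HK⟩ := free_bound hd hgs hP.gradSq heM.2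
  obtain ⟨C, hC1, hC⟩ := adm_ghat heC3 hP
  obtain ⟨D, hD, HD⟩ := norm_bound d
  set K : ℝ := K0 * C * C + 1 with hK
  have hKpos : 0 < K := by positivity
  refine ⟨1 / (4 * K), by positivity, ?_⟩
  intro V g G Cv hg hG hCv hPhi
  obtain ⟨hV, hV2⟩ := phi_bound (by positivity) hPhi
  refine ⟨2 * K, fun z hz R hR x y => ?_⟩
  have hω : ∀ x : Γd d, 1 ≤ (1 + lnorm x) ^ 2 := fun x => by
    have := lnorm_nonneg x
    nlinarith
  have hadm : ∀ w : Γd d, ∀ v : L2 d, (v = delta w ∨ v = g w) →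
      ∃ b, Adm b (C * (1 + lnorm w) ^ 2) ∧ ∀ m, v m = coeff b m := by
    rintro w v (rfl | rfl)
    · refine ⟨ex w, (adm_ex w).mono ?_, delta_coeff w⟩
      have h1 := lnorm_nonneg w
      have h2 : 1 + lnorm w ≤ (1 + lnorm w) ^ 2 := by nlinarith
      nlinarith [hω w]
    · exact ⟨ghat e w, hC w, hg w⟩
  refine absorb hR.1 hCv (ω := fun x => (1 + lnorm x) ^ 2) hω hKpos ?_ (C0 := D * C) ?_ hV ?_ x y
  · intro w v hv
    obtain ⟨b, hb, hvb⟩ := hadm w v hv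
    obtain ⟨r, hr, hrb⟩ := HK G hG z hz b _ hb v hvb
    refine ⟨r, hr, ?_⟩
    have hgen : ∀ u : Γd d, ∀ t : L2 d, (t = delta u ∨ t = g u) →
        ‖⟪t, r⟫‖ ≤ K * (1 + lnorm u) ^ 2 * (1 + lnorm w) ^ 2 := by
      intro u t ht
      obtain ⟨a, ha, hta⟩ := hadm u t ht
      refine (hrb a _ ha t hta).trans ?_
      have : 0 ≤ (1 + lnorm u) ^ 2 * (1 + lnorm w) ^ 2 := by positivity
      calc _ = (K0 * C * C) * ((1 + lnorm u) ^ 2 * (1 + lnorm w) ^ 2) := by ring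
        _ ≤ K * ((1 + lnorm u) ^ 2 * (1 + lnorm w) ^ 2) :=
            mul_le_mul_of_nonneg_right (by linarith) this
        _ = _ := by ring
    exact fun u => ⟨hgen u _ (Or.inl rfl), hgen u _ (Or.inr rfl)⟩
  · intro w
    obtain ⟨b, hb, hvb⟩ := hadm w _ (Or.inr rfl)
    have := HD b _ hb _ hvb
    linarith
  · have := mul_le_mul_of_nonneg_left hV2 (by positivity : 0 ≤ 4 * K)
    rwa [mul_one_div_cancel (by positivity)] at this
end LatSch
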